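/- arXiv:1202.0153 — 12 statements merged into one kernel-verified Lean document; each statement's English description precedes it below -/
import Mathlib

section
/- For every d ≥ 1, any family of pairwise non-overlapping closed unit balls in ℝ^d, all of which touch a fixed closed unit ball, has at most 3^d − 1 members. (That is, the kissing number κ(d) of ℝ^d satisfies κ(d) ≤ 3^d − 1.) -/
/-! The open balls of radius `1` about `c₀` and all the `c i` are pairwise disjoint and lie in the
ball of radius `3` about `c₀`, whose volume is `3 ^ d` times that of each of them. -/

open MeasureTheory Metric Module
open scoped ENNReal

theorem tsum_measure_ball_le_measure_ball {X ι : Type*} [PseudoMetricSpace X] [MeasurableSpace X]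
    [OpensMeasurableSpace X] (μ : Measure X) {x₀ : X} {R : ℝ} {x : ι → X} {r : ι → ℝ}
    (hsep : Pairwise fun i j => r i + r j ≤ dist (x i) (x j))
    (hsub : ∀ i, r i + dist (x i) x₀ ≤ R) :
    ∑' i, μ (ball (x i) (r i)) ≤ μ (ball x₀ R) :=
  calc ∑' i, μ (ball (x i) (r i))
    _ ≤ μ (⋃ i, ball (x i) (r i)) :=
        tsum_meas_le_meas_iUnion_of_disjoint μ (fun _ => measurableSet_ball)
          fun _ _ hij => ball_disjoint_ball (hsep hij)
    _ ≤ μ (ball x₀ R) := measure_mono (Set.iUnion_subset fun i => ball_subset_ball' (hsub i))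

section NormedSpace

variable {E ι : Type*} [NormedAddCommGroup E] [NormedSpace ℝ E] [FiniteDimensional ℝ E]
  {x₀ : E} {x : ι → E}

theorem tsum_ofReal_pow_finrank_le_of_ball_packing {R : ℝ} {r : ι → ℝ} (hr : ∀ i, 0 < r i)
    (hsep : Pairwise fun i j => r i + r j ≤ dist (x i) (x j))
    (hsub : ∀ i, r i + dist (x i) x₀ ≤ R) :
    ∑' i, ENNReal.ofReal (r i ^ finrank ℝ E) ≤ ENNReal.ofReal (R ^ finrank ℝ E) := by
  rcases isEmpty_or_nonempty ι with _ | ⟨⟨i₀⟩⟩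
  · simp
  have hR : 0 < R := (add_pos_of_pos_of_nonneg (hr i₀) dist_nonneg).trans_le (hsub i₀)
  borelize E
  let μ : Measure E := Measure.addHaar
  have hvol := tsum_measure_ball_le_measure_ball μ hsep hsub
  simp only [μ.addHaar_ball_of_pos _ (hr _), μ.addHaar_ball_of_pos _ hR, ENNReal.tsum_mul_right]
    at hvol
  exact (ENNReal.mul_le_mul_iff_left (measure_ball_pos μ 0 one_pos).ne' measure_ball_lt_top.ne).1
    hvol

theorem card_le_ofReal_div_pow_finrank_of_ball_packing {r R : ℝ} (hr : 0 < r)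
    (hsep : Pairwise fun i j => 2 * r ≤ dist (x i) (x j))
    (hsub : ∀ i, r + dist (x i) x₀ ≤ R) :
    (ENat.card ι : ℝ≥0∞) ≤ ENNReal.ofReal ((R / r) ^ finrank ℝ E) := by
  have hpack := tsum_ofReal_pow_finrank_le_of_ball_packing (r := fun _ : ι => r) (fun _ => hr)
    (by simpa only [two_mul] using hsep) hsub
  have hpow : 0 < r ^ finrank ℝ E := pow_pos hr _
  rw [ENNReal.tsum_const] at hpack
  rwa [div_pow, ENNReal.ofReal_div_of_pos hpow,
    ENNReal.le_div_iff_mul_le (by simp [hpow]) (by simp)]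

/-- The kissing balls have radius `δ / 2`. -/
theorem kissing_number_le_general {δ : ℝ} (hδ : 0 < δ) (htouch : ∀ i, dist (x i) x₀ = δ)
    (hsep : Pairwise fun i j => δ ≤ dist (x i) (x j)) :
    ENat.card ι + 1 ≤ 3 ^ finrank ℝ E := by
  let y : Option ι → E := fun o => o.elim x₀ x
  have hy_sep : Pairwise fun o p => 2 * (δ / 2) ≤ dist (y o) (y p) := by
    rw [mul_div_cancel₀ δ two_ne_zero]
    rintro (_ | i) (_ | j) hne
    · exact absurd rfl hne
    · exact (dist_comm x₀ (x j) ▸ htouch j).ge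
    · exact (htouch i).ge
    · exact hsep (ne_of_apply_ne some hne)
  have hy_sub : ∀ o, δ / 2 + dist (y o) x₀ ≤ 3 * (δ / 2) := by
    rintro (_ | i)
    · simp only [y, Option.elim_none, dist_self]
      linarith
    · simp only [y, Option.elim_some, htouch]
      linarith
  have hcard := card_le_ofReal_div_pow_finrank_of_ball_packing (half_pos hδ) hy_sep hy_sub
  rw [mul_div_cancel_right₀ _ (half_pos hδ).ne', ENNReal.ofReal_pow zero_le_three,
    ENNReal.ofReal_ofNat] at hcard
  have hoption : ENat.card (Option ι) = ENat.card ι + 1 := by simp [ENat.card]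
  rw [← hoption]
  exact_mod_cast hcard

end NormedSpace

/-- Kissing number bound: for `d ≥ 1`, any family of pairwise non-overlapping closed unit
balls in `ℝ^d`, all touching a fixed closed unit ball, has at most `3 ^ d - 1` members. -/
theorem kissing_number_le (d n : ℕ) (hd : 1 ≤ d)
    (c₀ : EuclideanSpace ℝ (Fin d)) (c : Fin n → EuclideanSpace ℝ (Fin d))
    (htouch : ∀ i : Fin n, dist (c i) c₀ = 2)
    (hsep : ∀ i j : Fin n, i ≠ j → 2 ≤ dist (c i) (c j)) :
    n ≤ 3 ^ d - 1 := by
  have hcard := kissing_number_le_general two_pos htouch hsep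
  rw [ENat.card_eq_coe_fintype_card, Fintype.card_fin, finrank_euclideanSpace_fin] at hcard
  exact Nat.le_sub_of_add_le (by exact_mod_cast hcard)
end

section
/- Let c₁, …, cₙ be points of ℝ^d and r₁, …, rₙ ≥ 1 real numbers with ‖cᵢ‖ = 1 + rᵢ for all i (so each ball of radius rᵢ centered at cᵢ touches the unit ball at the origin) and ‖cᵢ − cⱼ‖ ≥ rᵢ + rⱼ for all i ≠ j (the balls are pairwise non-overlapping). Then the points pᵢ = 2·cᵢ/‖cᵢ‖ satisfy ‖pᵢ‖ = 2 for all i and ‖pᵢ − pⱼ‖ ≥ 2 for all i ≠ j; that is, the unit balls centered at the pᵢ are pairwise non-overlapping and all touch the unit ball at the origin. -/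
/-!
In the triangle with vertices `0`, `cᵢ`, `cⱼ` the side opposite to the origin is the longest one:
`‖cᵢ‖ = 1 + rᵢ ≤ rⱼ + rᵢ ≤ ‖cᵢ - cⱼ‖`, and likewise for `‖cⱼ‖`. Hence the angle at the origin is
at least `π / 3`. Moving `cᵢ` and `cⱼ` along their rays to distance `2` preserves this angle, and
in an isosceles triangle with apex angle at least `π / 3` the base is at least as long as the legs.
-/

section InnerProductSpace

open InnerProductGeometry

variable {E : Type*} [NormedAddCommGroup E] [InnerProductSpace ℝ E] {x y : E}

lemma pi_div_three_le_angle_iff_inner_le :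
    Real.pi / 3 ≤ angle x y ↔ 2 * inner ℝ x y ≤ ‖x‖ * ‖y‖ := by
  rcases eq_or_ne x 0 with rfl | hx
  · simp only [angle_zero_left, inner_zero_left, norm_zero, mul_zero, zero_mul, le_refl, iff_true]
    linarith [Real.pi_pos]
  rcases eq_or_ne y 0 with rfl | hy
  · simp only [angle_zero_right, inner_zero_right, norm_zero, mul_zero, le_refl, iff_true]
    linarith [Real.pi_pos]
  have hpos : 0 < ‖x‖ * ‖y‖ := mul_pos (norm_pos_iff.2 hx) (norm_pos_iff.2 hy)
  have hpi : Real.pi / 3 ∈ Set.Icc 0 Real.pi :=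
    ⟨by positivity, by linarith [Real.pi_pos]⟩
  rw [← Real.strictAntiOn_cos.le_iff_ge ⟨angle_nonneg x y, angle_le_pi x y⟩ hpi,
    Real.cos_pi_div_three, cos_angle, div_le_iff₀ hpos]
  constructor <;> intro h <;> linarith

lemma pi_div_three_le_angle_of_max_norm_le_norm_sub (h : max ‖x‖ ‖y‖ ≤ ‖x - y‖) :
    Real.pi / 3 ≤ angle x y := by
  rw [pi_div_three_le_angle_iff_inner_le]
  have hsq : max ‖x‖ ‖y‖ ^ 2 ≤ ‖x - y‖ ^ 2 := by gcongr
  rw [norm_sub_sq_real] at hsq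
  rcases le_total ‖x‖ ‖y‖ with hle | hle
  · rw [max_eq_right hle] at hsq
    linarith [mul_le_mul_of_nonneg_left hle (norm_nonneg x)]
  · rw [max_eq_left hle] at hsq
    linarith [mul_le_mul_of_nonneg_left hle (norm_nonneg y)]

lemma min_norm_le_norm_sub_of_pi_div_three_le_angle (h : Real.pi / 3 ≤ angle x y) :
    min ‖x‖ ‖y‖ ≤ ‖x - y‖ := by
  rw [pi_div_three_le_angle_iff_inner_le] at h
  refine le_of_sq_le_sq ?_ (norm_nonneg _)
  rw [norm_sub_sq_real]
  rcases le_total ‖x‖ ‖y‖ with hle | hle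
  · rw [min_eq_left hle]
    linarith [mul_le_mul_of_nonneg_left hle (norm_nonneg y)]
  · rw [min_eq_right hle]
    linarith [mul_le_mul_of_nonneg_left hle (norm_nonneg x)]

theorem shrinking_lemma_kissing_general {ι : Type*} {c : ι → E} (hc : ∀ i, c i ≠ 0)
    (hsep : ∀ i j, i ≠ j → ‖c i‖ ≤ ‖c i - c j‖) {t : ℝ} (ht : 0 < t) :
    (∀ i, ‖(t / ‖c i‖) • c i‖ = t) ∧
      ∀ i j, i ≠ j → t ≤ ‖(t / ‖c i‖) • c i - (t / ‖c j‖) • c j‖ := by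
  have hnorm (i : ι) : ‖(t / ‖c i‖) • c i‖ = t := norm_smul_inv_norm' (𝕜 := ℝ) ht.le (hc i)
  have hscale (i : ι) : 0 < t / ‖c i‖ := div_pos ht (norm_pos_iff.2 (hc i))
  refine ⟨hnorm, fun i j hij ↦ ?_⟩
  have hmax : max ‖c i‖ ‖c j‖ ≤ ‖c i - c j‖ :=
    max_le (hsep i j hij) (norm_sub_rev (c i) (c j) ▸ hsep j i hij.symm)
  have hangle : Real.pi / 3 ≤ angle ((t / ‖c i‖) • c i) ((t / ‖c j‖) • c j) := by
    rw [angle_smul_left_of_pos _ _ (hscale i), angle_smul_right_of_pos _ _ (hscale j)]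
    exact pi_div_three_le_angle_of_max_norm_le_norm_sub hmax
  simpa only [hnorm, min_self] using min_norm_le_norm_sub_of_pi_div_three_le_angle hangle

end InnerProductSpace

/-- Shrinking lemma: if balls of radii `rᵢ ≥ 1` centered at `cᵢ` touch the unit ball at the
origin (`‖cᵢ‖ = 1 + rᵢ`) and are pairwise non-overlapping, then the points
`pᵢ = 2 • cᵢ / ‖cᵢ‖` satisfy `‖pᵢ‖ = 2` and `‖pᵢ - pⱼ‖ ≥ 2` for `i ≠ j`. -/
theorem shrinking_lemma_kissing (d n : ℕ) (c : Fin n → EuclideanSpace ℝ (Fin d))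
    (r : Fin n → ℝ) (hr : ∀ i, 1 ≤ r i)
    (htouch : ∀ i, ‖c i‖ = 1 + r i)
    (hsep : ∀ i j : Fin n, i ≠ j → r i + r j ≤ ‖c i - c j‖) :
    (∀ i, ‖(2 / ‖c i‖) • c i‖ = 2) ∧
      (∀ i j : Fin n, i ≠ j → 2 ≤ ‖(2 / ‖c i‖) • c i - (2 / ‖c j‖) • c j‖) :=
  shrinking_lemma_kissing_general (fun i ↦ norm_pos_iff.1 (by linarith [hr i, htouch i]))
    (fun i j hij ↦ by linarith [hr j, htouch i, hsep i j hij]) two_pos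
end

section
/- Let d ≥ 1 and let B₁, …, Bₙ (n ≥ 1) be pairwise non-overlapping closed balls in ℝ^d with positive radii. Then any ball of minimal radius among them touches at most 3^d − 1 of the other balls. -/
/-!
Shrink every ball that touches the smallest one, of center `x` and radius `ρ`, to a ball of
radius `ρ` inside it whose center is within `2 * ρ` of `x`. Together with the smallest ball itself
these are disjoint balls of radius `ρ` inside the ball of radius `3 * ρ` around `x`, so comparing
volumes there are at most `3 ^ d` of them.
-/

open MeasureTheory Metric Module

section BallPacking

variable {ι E : Type*} [NormedAddCommGroup E] [NormedSpace ℝ E]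

theorem tsum_ofReal_pow_finrank_le_of_disjoint_ball [FiniteDimensional ℝ E] {c : ι → E} {r : ι → ℝ}
    {x : E} {R : ℝ} (hr : ∀ i, 0 < r i)
    (hdisj : Pairwise fun i j => Disjoint (ball (c i) (r i)) (ball (c j) (r j)))
    (hsub : ∀ i, ball (c i) (r i) ⊆ ball x R) :
    ∑' i, ENNReal.ofReal (r i) ^ finrank ℝ E ≤ ENNReal.ofReal R ^ finrank ℝ E := by
  borelize E
  let μ : Measure E := Measure.addHaar
  have measure_ball (y : E) {s : ℝ} (hs : 0 < s) :
      μ (ball y s) = ENNReal.ofReal s ^ finrank ℝ E * μ (ball 0 1) := by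
    rw [μ.addHaar_ball_of_pos y hs, ENNReal.ofReal_pow hs.le]
  rcases isEmpty_or_nonempty ι with _ | ⟨⟨i⟩⟩
  · simp
  have hR : 0 < R := pos_of_mem_ball (hsub i (mem_ball_self (hr i)))
  refine (ENNReal.mul_le_mul_iff_left (measure_ball_pos μ (0 : E) one_pos).ne'
    measure_ball_lt_top.ne).1 ?_
  calc (∑' i, ENNReal.ofReal (r i) ^ finrank ℝ E) * μ (ball 0 1)
      = ∑' i, μ (ball (c i) (r i)) := by
        simp only [← ENNReal.tsum_mul_right, measure_ball _ (hr _)]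
    _ ≤ μ (⋃ i, ball (c i) (r i)) :=
        tsum_meas_le_meas_iUnion_of_disjoint μ (fun _ => measurableSet_ball) hdisj
    _ ≤ μ (ball x R) := measure_mono (Set.iUnion_subset hsub)
    _ = ENNReal.ofReal R ^ finrank ℝ E * μ (ball 0 1) := measure_ball x hR

theorem exists_ball_subset_ball_of_dist_le {x y : E} {ρ r R : ℝ} (hR : 0 ≤ R + ρ) (hr : ρ ≤ r)
    (hxy : dist x y ≤ R + r) :
    ∃ z, ball z ρ ⊆ ball y r ∧ ball z ρ ⊆ ball x (R + 2 * ρ) := by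
  obtain ⟨z, hxz, hzy⟩ : ∃ z, dist x z ≤ R + ρ ∧ dist z y ≤ r - ρ :=
    exists_dist_le_le hR (sub_nonneg.2 hr) (by linarith)
  rw [dist_comm] at hxz
  exact ⟨z, ball_subset_ball' (by linarith), ball_subset_ball' (by linarith)⟩

theorem encard_dist_le_mul_ofReal_pow_finrank_le [FiniteDimensional ℝ E] {c : ι → E} {r : ι → ℝ}
    {x : E} {ρ R : ℝ} (hρ : 0 < ρ) (hR : 0 ≤ R + ρ) (hr : ∀ i, ρ ≤ r i)
    (hdisj : Pairwise fun i j => Disjoint (ball (c i) (r i)) (ball (c j) (r j))) :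
    ({i | dist x (c i) ≤ R + r i}.encard : ENNReal) * ENNReal.ofReal ρ ^ finrank ℝ E ≤
      ENNReal.ofReal (R + 2 * ρ) ^ finrank ℝ E := by
  choose z hz hzx using fun i : {i | dist x (c i) ≤ R + r i} =>
    exists_ball_subset_ball_of_dist_le hR (hr i) i.2
  rw [← ENNReal.tsum_set_const]
  exact tsum_ofReal_pow_finrank_le_of_disjoint_ball (fun _ => hρ)
    (fun i j hij => (hdisj (Subtype.coe_ne_coe.2 hij)).mono (hz i) (hz j)) hzx

theorem encard_dist_le_radius_add_le_three_pow [FiniteDimensional ℝ E] {c : ι → E} {r : ι → ℝ}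
    {x : E} {ρ : ℝ} (hρ : 0 < ρ) (hr : ∀ i, ρ ≤ r i)
    (hdisj : Pairwise fun i j => Disjoint (ball (c i) (r i)) (ball (c j) (r j))) :
    {i | dist x (c i) ≤ ρ + r i}.encard ≤ 3 ^ finrank ℝ E := by
  have hρd : ENNReal.ofReal ρ ^ finrank ℝ E ≠ 0 := by simp [hρ]
  have hvol := encard_dist_le_mul_ofReal_pow_finrank_le (x := x) hρ (by positivity) hr hdisj
  rw [show ρ + 2 * ρ = 3 * ρ by ring, ENNReal.ofReal_mul zero_le_three, mul_pow,
    ENNReal.mul_le_mul_iff_left hρd (by finiteness), ENNReal.ofReal_ofNat] at hvol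
  exact_mod_cast hvol

end BallPacking

theorem smallest_ball_touches_at_most_general {ι E : Type*} [NormedAddCommGroup E]
    [NormedSpace ℝ E] [FiniteDimensional ℝ E] (c : ι → E) (r : ι → ℝ)
    (hsep : Pairwise fun i j => r i + r j ≤ dist (c i) (c j))
    (i₀ : ι) (hpos : 0 < r i₀) (hmin : ∀ i, r i₀ ≤ r i) :
    {j | j ≠ i₀ ∧ dist (c i₀) (c j) = r i₀ + r j}.encard ≤ (3 ^ finrank ℝ E - 1 : ℕ) := by
  set near := {j | dist (c i₀) (c j) ≤ r i₀ + r j}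
  have hdisj : Pairwise fun i j => Disjoint (ball (c i) (r i)) (ball (c j) (r j)) :=
    fun i j hij => ball_disjoint_ball (hsep hij)
  have mem_near : i₀ ∈ near := by simp [near, hpos.le]
  calc {j | j ≠ i₀ ∧ dist (c i₀) (c j) = r i₀ + r j}.encard
      ≤ (near \ {i₀}).encard := Set.encard_le_encard fun j hj => ⟨hj.2.le, hj.1⟩
    _ = near.encard - 1 := Set.encard_sdiff_singleton_of_mem mem_near
    _ ≤ 3 ^ finrank ℝ E - 1 :=
        tsub_le_tsub_right (encard_dist_le_radius_add_le_three_pow hpos hmin hdisj) 1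
    _ = (3 ^ finrank ℝ E - 1 : ℕ) := by push_cast; rfl

/-- In a family of `n ≥ 1` pairwise non-overlapping closed balls in `ℝ^d` (`d ≥ 1`) with
positive radii, a ball of minimal radius touches at most `3 ^ d - 1` of the other balls. -/
theorem smallest_ball_touches_at_most (d n : ℕ) (hd : 1 ≤ d) (hn : 1 ≤ n)
    (c : Fin n → EuclideanSpace ℝ (Fin d)) (r : Fin n → ℝ)
    (hr : ∀ i, 0 < r i)
    (hsep : ∀ i j : Fin n, i ≠ j → r i + r j ≤ dist (c i) (c j))
    (i₀ : Fin n) (hmin : ∀ i, r i₀ ≤ r i) :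
    {j : Fin n | j ≠ i₀ ∧ dist (c i₀) (c j) = r i₀ + r j}.ncard ≤ 3 ^ d - 1 := by
  have h := smallest_ball_touches_at_most_general c r hsep i₀ (hr i₀) hmin
  rw [finrank_euclideanSpace_fin] at h
  exact (Set.encard_le_coe_iff_finite_ncard_le.1 h).2
end

section
/- Let d ≥ 1. Every finite family of pairwise non-overlapping closed balls in ℝ^d with positive radii admits a colouring with 3^d colours such that any two touching balls receive different colours. -/
/-!
The smallest ball of a finite family touches fewer than `3 ^ d` of the others: if `ρ` is its radius
and `x` its centre, each ball of the family that touches it, and the smallest ball itself, contains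
a ball of radius `ρ` lying in the closed ball of radius `3 * ρ` about `x`, and comparing volumes
leaves room for at most `3 ^ d` of these. Colouring the balls greedily in order of decreasing radius
therefore needs only `3 ^ d` colours. The de Bruijn–Erdős theorem extends this to infinite families.
-/

open Finset Metric Module MeasureTheory

section Coloring

variable {V : Type*} {G : SimpleGraph V} {k : ℕ}

theorem colorable_of_forall_finset_induce_colorable
    (h : ∀ s : Finset V, (G.induce (s : Set V)).Colorable k) : G.Colorable k :=
  SimpleGraph.nonempty_hom_of_forall_finite_subgraph_hom fun G' hG' ↦
    (h hG'.toFinset).some.comp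
      ⟨fun v ↦ ⟨v, by simp⟩, fun hvw ↦ G'.adj_sub hvw⟩

variable [DecidableRel G.Adj]

theorem induce_colorable_of_induce_erase_colorable [DecidableEq V] {s : Finset V} {v : V}
    (hs : (G.induce (s.erase v : Set V)).Colorable k) (hv : #{w ∈ s | G.Adj v w} < k) :
    (G.induce (s : Set V)).Colorable k := by
  obtain ⟨C⟩ := hs
  have mem_erase_of_ne {w : (s : Set V)} (hw : (w : V) ≠ v) : (w : V) ∈ s.erase v :=
    mem_erase.2 ⟨hw, w.2⟩
  obtain ⟨a, ha⟩ : ∃ a, ∀ w : (s.erase v : Set V), G.Adj v w → C w ≠ a := by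
    by_contra! hused
    choose g hadj hg using hused
    have hg_inj : Function.Injective fun a ↦ (g a : V) :=
      Subtype.val_injective.comp (Function.LeftInverse.injective hg)
    have hk : #(univ : Finset (Fin k)) ≤ #{w ∈ s | G.Adj v w} :=
      card_le_card_of_injOn (fun a ↦ (g a : V))
        (fun a _ ↦ mem_filter.2 ⟨erase_subset v s (g a).2, hadj a⟩) hg_inj.injOn
    rw [card_fin] at hk
    exact hv.not_ge hk
  refine ⟨.mk (fun w ↦ if hw : (w : V) = v then a else C ⟨w, mem_erase_of_ne hw⟩) ?_⟩
  intro u w (huw : G.Adj u w)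
  by_cases hu : (u : V) = v <;> by_cases hw : (w : V) = v
  · exact absurd (hu.trans hw.symm) huw.ne
  · simpa [hu, hw] using (ha ⟨w, mem_erase_of_ne hw⟩ (hu ▸ huw)).symm
  · simpa [hu, hw] using ha ⟨u, mem_erase_of_ne hu⟩ (hw ▸ huw.symm)
  · simpa [hu, hw] using
      C.valid (v := ⟨u, mem_erase_of_ne hu⟩) (w := ⟨w, mem_erase_of_ne hw⟩) huw

theorem colorable_of_forall_finset_exists_card_adj_lt
    (h : ∀ s : Finset V, s.Nonempty → ∃ v ∈ s, #{w ∈ s | G.Adj v w} < k) : G.Colorable k := by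
  classical
  refine colorable_of_forall_finset_induce_colorable fun s ↦ ?_
  induction s using Finset.strongInduction with
  | H s ih =>
    obtain rfl | hs := s.eq_empty_or_nonempty
    · have : IsEmpty ((∅ : Finset V) : Set V) := by simp
      exact .of_isEmpty k
    · obtain ⟨v, hvs, hv⟩ := h s hs
      exact induce_colorable_of_induce_erase_colorable (ih _ (erase_ssubset hvs)) hv

end Coloring

section Packing

variable {ι E : Type*} [NormedAddCommGroup E] [NormedSpace ℝ E]

theorem sum_pow_finrank_le_of_pairwiseDisjoint_ball [FiniteDimensional ℝ E]
    {s : Finset ι} {c : ι → E} {r : ι → ℝ} {x : E} {R : ℝ} (hR : 0 ≤ R) (hr : ∀ i ∈ s, 0 < r i)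
    (hdisj : (s : Set ι).PairwiseDisjoint fun i ↦ ball (c i) (r i))
    (hsub : ∀ i ∈ s, ball (c i) (r i) ⊆ closedBall x R) :
    ∑ i ∈ s, r i ^ finrank ℝ E ≤ R ^ finrank ℝ E := by
  borelize E
  let μ : Measure E := Measure.addHaar
  have hunit : 0 < μ.real (ball 0 1) :=
    ENNReal.toReal_pos (measure_ball_pos μ 0 one_pos).ne' measure_ball_lt_top.ne
  have hball {i} (hi : i ∈ s) :
      μ.real (ball (c i) (r i)) = r i ^ finrank ℝ E * μ.real (ball 0 1) := by
    rw [measureReal_def, μ.addHaar_ball_of_pos _ (hr i hi), ENNReal.toReal_mul,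
      ENNReal.toReal_ofReal (pow_nonneg (hr i hi).le _), measureReal_def]
  refine le_of_mul_le_mul_right ?_ hunit
  calc (∑ i ∈ s, r i ^ finrank ℝ E) * μ.real (ball 0 1)
      = ∑ i ∈ s, μ.real (ball (c i) (r i)) := by
        rw [sum_mul, sum_congr rfl fun i hi ↦ hball hi]
    _ = μ.real (⋃ i ∈ s, ball (c i) (r i)) :=
        (measureReal_biUnion_finset hdisj (fun _ _ ↦ measurableSet_ball)
          fun _ _ ↦ measure_ball_lt_top.ne).symm
    _ ≤ μ.real (closedBall x R) :=
        measureReal_mono (Set.iUnion₂_subset hsub) measure_closedBall_lt_top.ne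
    _ = R ^ finrank ℝ E * μ.real (ball 0 1) := μ.addHaar_real_closedBall x hR

theorem exists_ball_subset_ball_and_subset_closedBall {x y : E} {ρ R : ℝ} (hρ : 0 ≤ ρ)
    (hρR : ρ ≤ R) (hxy : dist x y ≤ ρ + R) :
    ∃ p, ball p ρ ⊆ ball y R ∧ ball p ρ ⊆ closedBall x (3 * ρ) := by
  obtain ⟨p, hxp, hpy⟩ : ∃ p, dist x p ≤ 2 * ρ ∧ dist p y ≤ R - ρ :=
    exists_dist_le_le (by positivity) (sub_nonneg.2 hρR) (by linarith)
  rw [dist_comm] at hxp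
  exact ⟨p, ball_subset_ball' (by linarith),
    ball_subset_closedBall.trans (closedBall_subset_closedBall' (by linarith))⟩

theorem card_le_three_pow_finrank_of_pairwiseDisjoint_ball [FiniteDimensional ℝ E]
    {s : Finset ι} {c : ι → E} {r : ι → ℝ} {x : E} {ρ : ℝ} (hρ : 0 < ρ)
    (hdisj : (s : Set ι).PairwiseDisjoint fun i ↦ ball (c i) (r i))
    (hr : ∀ i ∈ s, ρ ≤ r i) (hx : ∀ i ∈ s, dist x (c i) ≤ ρ + r i) :
    #s ≤ 3 ^ finrank ℝ E := by
  choose! p hpc hpx using fun i hi ↦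
    exists_ball_subset_ball_and_subset_closedBall hρ.le (hr i hi) (hx i hi)
  have hvol : ∑ _i ∈ s, ρ ^ finrank ℝ E ≤ (3 * ρ) ^ finrank ℝ E :=
    sum_pow_finrank_le_of_pairwiseDisjoint_ball (by positivity) (fun _ _ ↦ hρ)
      (fun i hi j hj hij ↦ (hdisj hi hj hij).mono (hpc i hi) (hpc j hj)) hpx
  rw [sum_const, nsmul_eq_mul, mul_pow] at hvol
  exact_mod_cast le_of_mul_le_mul_right hvol (pow_pos hρ _)

end Packing

section TouchingGraph

/-- The contact graph of the family of balls with centres `c i` and radii `r i`: two members are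
adjacent when the balls touch externally. Its vertices are the indices, so a proper colouring of
the family of balls is a colouring of this graph. -/
def touchingGraph {ι X : Type*} [PseudoMetricSpace X] (c : ι → X) (r : ι → ℝ) :
    SimpleGraph ι where
  Adj i j := i ≠ j ∧ dist (c i) (c j) = r i + r j
  symm := ⟨fun i j h ↦ ⟨h.1.symm, by rw [dist_comm, h.2, add_comm]⟩⟩
  loopless := ⟨fun _ h ↦ h.1 rfl⟩

variable {ι E : Type*} [NormedAddCommGroup E] [NormedSpace ℝ E] [FiniteDimensional ℝ E]
  {c : ι → E} {r : ι → ℝ}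

theorem card_touchingGraph_adj_lt_three_pow_finrank [DecidableRel (touchingGraph c r).Adj]
    (hsep : Pairwise fun i j ↦ r i + r j ≤ dist (c i) (c j)) {s : Finset ι} {a : ι}
    (ha : 0 < r a) (hmin : ∀ i ∈ s, r a ≤ r i) :
    #{i ∈ s | (touchingGraph c r).Adj a i} < 3 ^ finrank ℝ E := by
  set t := {i ∈ s | (touchingGraph c r).Adj a i}
  have hat : a ∉ t := fun h ↦ (mem_filter.1 h).2.ne rfl
  have htouch {i} (hi : i ∈ t) : dist (c a) (c i) = r a + r i := (mem_filter.1 hi).2.2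
  have hcard : #(cons a t hat) ≤ 3 ^ finrank ℝ E := by
    refine card_le_three_pow_finrank_of_pairwiseDisjoint_ball (c := c) (r := r) (x := c a) ha
      (fun i _ j _ hij ↦ ball_disjoint_ball (hsep hij)) ?_ ?_
    · exact (forall_mem_cons hat _).2 ⟨le_rfl, fun i hi ↦ hmin i (mem_filter.1 hi).1⟩
    · exact (forall_mem_cons hat _).2
        ⟨by rw [dist_self]; positivity, fun i hi ↦ (htouch hi).le⟩
  rwa [card_cons, Nat.succ_le_iff] at hcard

theorem balls_colouring_three_pow_general (hr : ∀ i, 0 < r i)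
    (hsep : Pairwise fun i j ↦ r i + r j ≤ dist (c i) (c j)) :
    (touchingGraph c r).Colorable (3 ^ finrank ℝ E) := by
  classical
  refine colorable_of_forall_finset_exists_card_adj_lt fun s hs ↦ ?_
  obtain ⟨a, has, hmin⟩ := s.exists_min_image r hs
  exact ⟨a, has, card_touchingGraph_adj_lt_three_pow_finrank hsep (hr a) hmin⟩

end TouchingGraph

/-- For `d ≥ 1`, every finite family of pairwise non-overlapping closed balls in `ℝ^d` with
positive radii admits a colouring with `3 ^ d` colours such that touching balls receive
different colours. -/
theorem balls_colouring_three_pow (d n : ℕ) (hd : 1 ≤ d)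
    (c : Fin n → EuclideanSpace ℝ (Fin d)) (r : Fin n → ℝ)
    (hr : ∀ i, 0 < r i)
    (hsep : ∀ i j : Fin n, i ≠ j → r i + r j ≤ dist (c i) (c j)) :
    ∃ f : Fin n → Fin (3 ^ d),
      ∀ i j : Fin n, i ≠ j → dist (c i) (c j) = r i + r j → f i ≠ f j := by
  obtain ⟨C⟩ := finrank_euclideanSpace_fin (𝕜 := ℝ) (n := d) ▸
    balls_colouring_three_pow_general hr hsep
  exact ⟨C, fun i j hij htouch ↦ C.valid ⟨hij, htouch⟩⟩
end

section
/- Let d ≥ 1 and let k be a natural number such that every family of pairwise non-overlapping closed unit balls in ℝ^d all touching a single fixed closed unit ball has at most k members. Then every finite family of pairwise non-overlapping closed balls in ℝ^d with positive radii admits a proper colouring with k + 1 colours. (That is, χ(d) ≤ κ(d) + 1.) -/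
/-!
Among finitely many balls take a smallest one, of radius `r`. Two non-overlapping balls of radius
at least `r` that touch it are seen from its centre at an angle of at least `π / 3`, so replacing
each touching ball by the unit ball in the same direction yields a kissing configuration, and the
smallest ball touches at most `k` others. Hence the tangency graph is `k`-degenerate, and colouring
greedily in order of decreasing radius needs only `k + 1` colours. Compactness extends this to
infinite families.
-/

section Degenerate

variable {V α : Type*} {G : SimpleGraph V} {k n : ℕ}

/-- A graph is `k`-degenerate if each of its nonempty finite induced subgraphs has a vertex of
degree at most `k`. Testing only finite subgraphs makes the notion usable on infinite graphs. -/
def IsDegenerate (G : SimpleGraph V) (k : ℕ) : Prop :=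
  ∀ s : Finset V, s.Nonempty → ∃ a ∈ s, (G.neighborSet a ∩ s).encard ≤ k

/-- The function `f` is a proper colouring of the subgraph of `G` induced on `s`; its values
outside `s` are irrelevant, so that colourings can be extended one vertex at a time. -/
def IsProperColoringOn (G : SimpleGraph V) (s : Set V) (f : V → α) : Prop :=
  s.Pairwise fun i j ↦ G.Adj i j → f i ≠ f j

lemma IsProperColoringOn.exists_insert {s : Set V} {f : V → α} {a : V}
    (hf : IsProperColoringOn G s f) (ha : a ∉ s)
    (hcard : (G.neighborSet a ∩ s).encard < ENat.card α) :
    ∃ g : V → α, IsProperColoringOn G (insert a s) g := by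
  classical
  obtain ⟨z, hz⟩ : ∃ z, z ∉ f '' (G.neighborSet a ∩ s) := by
    refine (Set.ne_univ_iff_exists_notMem _).1 fun h ↦ ?_
    have hle := Set.encard_image_le f (G.neighborSet a ∩ s)
    rw [h, Set.encard_univ] at hle
    exact hcard.not_ge hle
  have hupdate {i : V} (hi : i ∈ s) : Function.update f a z i = f i :=
    Function.update_of_ne (ne_of_mem_of_not_mem hi ha) _ _
  have : Std.Symm fun i j ↦ G.Adj i j → Function.update f a z i ≠ Function.update f a z j :=
    ⟨fun _ _ h hadj ↦ (h hadj.symm).symm⟩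
  refine ⟨Function.update f a z,
    Set.Pairwise.insert_of_symm (fun i hi j hj hij ↦ ?_) fun j hj _ hadj ↦ ?_⟩
  · rw [hupdate hi, hupdate hj]
    exact hf hi hj hij
  · rw [Function.update_self, hupdate hj]
    exact fun h ↦ hz ⟨j, ⟨hadj, hj⟩, h.symm⟩

lemma IsDegenerate.exists_isProperColoringOn (hG : IsDegenerate G k) (s : Finset V) :
    ∃ f : V → Fin (k + 1), IsProperColoringOn G s f := by
  classical
  induction s using Finset.strongInduction with
  | H s ih =>
    obtain rfl | hs := s.eq_empty_or_nonempty
    · exact ⟨fun _ ↦ 0, by simp [IsProperColoringOn]⟩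
    obtain ⟨a, has, hdeg⟩ := hG s hs
    obtain ⟨f, hf⟩ := ih (s.erase a) (Finset.erase_ssubset has)
    have hcard : (G.neighborSet a ∩ s.erase a).encard < ENat.card (Fin (k + 1)) := by
      calc (G.neighborSet a ∩ s.erase a).encard
          ≤ (G.neighborSet a ∩ s).encard := by gcongr; exact s.erase_subset a
        _ ≤ k := hdeg
        _ < ENat.card (Fin (k + 1)) := by
          rw [ENat.card_eq_coe_fintype_card, Fintype.card_fin]
          exact_mod_cast k.lt_succ_self
    rw [← Finset.insert_erase has, Finset.coe_insert]
    exact hf.exists_insert (Finset.notMem_erase a s) hcard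

lemma colorable_of_forall_finset_exists_isProperColoringOn
    (h : ∀ s : Finset V, ∃ f : V → Fin n, IsProperColoringOn G s f) : G.Colorable n := by
  choose f hf using h
  exact SimpleGraph.nonempty_hom_of_forall_finite_subgraph_hom fun H hH ↦
    { toFun v := f hH.toFinset v
      map_rel' {v w} hvw :=
        hf hH.toFinset (by simp) (by simp) (Subtype.coe_ne_coe.2 hvw.ne) (H.adj_sub hvw) }

theorem IsDegenerate.colorable (hG : IsDegenerate G k) : G.Colorable (k + 1) :=
  colorable_of_forall_finset_exists_isProperColoringOn hG.exists_isProperColoringOn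

end Degenerate

section Kissing

open InnerProductGeometry NormedSpace

/-- The number `k` is an upper bound for the kissing number of `E`: at most `k` pairwise
non-overlapping unit balls, with centres `p`, touch the unit ball centred at `c₀`. -/
def IsKissingBound (E : Type*) [PseudoMetricSpace E] (k : ℕ) : Prop :=
  ∀ (m : ℕ) (c₀ : E) (p : Fin m → E),
    (∀ i, dist (p i) c₀ = 2) → (∀ i j : Fin m, i ≠ j → 2 ≤ dist (p i) (p j)) → m ≤ k

variable {ι E : Type*} [NormedAddCommGroup E] [InnerProductSpace ℝ E]

lemma cos_angle_le_half_of_add_le_norm_sub {u v : E} {r a b : ℝ} (hr : 0 < r) (ha : r ≤ a)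
    (hb : r ≤ b) (hu : ‖u‖ = r + a) (hv : ‖v‖ = r + b) (huv : a + b ≤ ‖u - v‖) :
    Real.cos (angle u v) ≤ 1 / 2 := by
  have hcosines := norm_sub_sq_eq_norm_sq_add_norm_sq_sub_two_mul_norm_mul_norm_mul_cos_angle u v
  rw [hu, hv] at hcosines
  have hsq : (a + b) * (a + b) ≤ ‖u - v‖ * ‖u - v‖ := by gcongr; linarith
  have hpos : 0 < (r + a) * (r + b) := mul_pos (by linarith) (by linarith)
  have hrr : r * r ≤ a * b := mul_le_mul ha hb hr.le (hr.le.trans ha)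
  have hra : a * r ≤ a * b := mul_le_mul_of_nonneg_left hb (hr.le.trans ha)
  have hrb : r * b ≤ a * b := mul_le_mul_of_nonneg_right ha (hr.le.trans hb)
  have hradii : (r + a) * (r + a) + (r + b) * (r + b) - (a + b) * (a + b) ≤ (r + a) * (r + b) := by
    linarith
  refine le_of_mul_le_mul_left ?_ hpos
  linarith only [hcosines, hsq, hradii]

lemma norm_normalize_sub_normalize_sq {u v : E} (hu : u ≠ 0) (hv : v ≠ 0) :
    ‖normalize u - normalize v‖ ^ 2 = 2 - 2 * Real.cos (angle u v) := by
  have hcosines := norm_sub_sq_eq_norm_sq_add_norm_sq_sub_two_mul_norm_mul_norm_mul_cos_angle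
    (normalize u) (normalize v)
  rw [norm_normalize_eq_one_iff.2 hu, norm_normalize_eq_one_iff.2 hv, angle_normalize_left,
    angle_normalize_right] at hcosines
  linarith

lemma one_le_norm_normalize_sub_normalize_iff {u v : E} (hu : u ≠ 0) (hv : v ≠ 0) :
    1 ≤ ‖normalize u - normalize v‖ ↔ Real.cos (angle u v) ≤ 1 / 2 := by
  rw [← one_le_sq_iff₀ (norm_nonneg _), norm_normalize_sub_normalize_sq hu hv]
  constructor <;> intro h <;> linarith

lemma exists_unit_kissing_of_kissing {c₀ : E} {r₀ : ℝ} {c : ι → E} {r : ι → ℝ} (hr₀ : 0 < r₀)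
    (hr : ∀ i, r₀ ≤ r i) (htouch : ∀ i, dist (c i) c₀ = r₀ + r i)
    (hc : Pairwise fun i j ↦ r i + r j ≤ dist (c i) (c j)) :
    ∃ p : ι → E, (∀ i, dist (p i) c₀ = 2) ∧ Pairwise fun i j ↦ 2 ≤ dist (p i) (p j) := by
  have hnorm (i : ι) : ‖c i - c₀‖ = r₀ + r i := by rw [← dist_eq_norm, htouch]
  have hne (i : ι) : c i - c₀ ≠ 0 := norm_pos_iff.1 (by linarith [hnorm i, hr i])
  refine ⟨fun i ↦ c₀ + (2 : ℝ) • normalize (c i - c₀), fun i ↦ ?_, fun i j hij ↦ ?_⟩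
  · rw [dist_self_add_left, norm_smul, norm_normalize_eq_one_iff.2 (hne i), mul_one,
      Real.norm_ofNat]
  · have hsep : r i + r j ≤ ‖(c i - c₀) - (c j - c₀)‖ := by
      rw [sub_sub_sub_cancel_right, ← dist_eq_norm]
      exact hc hij
    have hone : 1 ≤ ‖normalize (c i - c₀) - normalize (c j - c₀)‖ :=
      (one_le_norm_normalize_sub_normalize_iff (hne i) (hne j)).2 <|
        cos_angle_le_half_of_add_le_norm_sub hr₀ (hr i) (hr j) (hnorm i) (hnorm j) hsep
    change 2 ≤ dist (c₀ + _) (c₀ + _)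
    rw [dist_add_left, dist_eq_norm, ← smul_sub, norm_smul, Real.norm_ofNat]
    linarith

end Kissing

section Tangency

variable {ι E : Type*}

/-- The graph joining two balls, given by their centres `c` and radii `r`, when they touch from
outside. Its proper colourings are the proper colourings of the family of balls. -/
def tangencyGraph [PseudoMetricSpace E] (c : ι → E) (r : ι → ℝ) : SimpleGraph ι where
  Adj i j := i ≠ j ∧ dist (c i) (c j) = r i + r j
  symm := ⟨fun i j h ↦ ⟨h.1.symm, by rw [dist_comm, h.2, add_comm]⟩⟩
  loopless := ⟨fun _ h ↦ h.1 rfl⟩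

variable [NormedAddCommGroup E] [InnerProductSpace ℝ E] {k : ℕ} {c : ι → E} {r : ι → ℝ}

lemma encard_le_of_forall_tangencyGraph_adj (hk : IsKissingBound E k)
    (hc : Pairwise fun i j ↦ r i + r j ≤ dist (c i) (c j)) {a : ι}
    (ha : 0 < r a) {t : Set ι} (ht : t.Finite) (hadj : ∀ i ∈ t, (tangencyGraph c r).Adj a i)
    (hmin : ∀ i ∈ t, r a ≤ r i) : t.encard ≤ k := by
  have := ht.to_subtype
  let e : Fin (Nat.card t) ≃ t := (Finite.equivFin t).symm
  obtain ⟨p, hp, hpp⟩ := exists_unit_kissing_of_kissing (c₀ := c a) (c := fun i ↦ c (e i))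
    (r := fun i ↦ r (e i)) ha (fun i ↦ hmin _ (e i).2)
    (fun i ↦ by rw [dist_comm, (hadj _ (e i).2).2])
    (hc.comp_of_injective (Subtype.val_injective.comp e.injective))
  rw [← ht.cast_ncard_eq]
  exact_mod_cast hk _ _ p hp hpp

lemma isDegenerate_tangencyGraph (hk : IsKissingBound E k) (hr : ∀ i, 0 < r i)
    (hc : Pairwise fun i j ↦ r i + r j ≤ dist (c i) (c j)) :
    IsDegenerate (tangencyGraph c r) k := by
  intro s hs
  obtain ⟨a, has, hmin⟩ := s.exists_min_image r hs
  exact ⟨a, has, encard_le_of_forall_tangencyGraph_adj hk hc (hr a)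
    (s.finite_toSet.inter_of_right _) (fun _ hi ↦ hi.1) fun i hi ↦ hmin i hi.2⟩

theorem chi_le_kissing_add_one_general (hk : IsKissingBound E k) (hr : ∀ i, 0 < r i)
    (hc : Pairwise fun i j ↦ r i + r j ≤ dist (c i) (c j)) :
    (tangencyGraph c r).Colorable (k + 1) :=
  (isDegenerate_tangencyGraph hk hr hc).colorable

end Tangency

/-- If every family of pairwise non-overlapping closed unit balls in `ℝ^d` all touching a
single fixed closed unit ball has at most `k` members, then every finite family of pairwise
non-overlapping closed balls in `ℝ^d` with positive radii admits a proper colouring with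
`k + 1` colours: `χ(d) ≤ κ(d) + 1`. -/
theorem chi_le_kissing_add_one (d k : ℕ) (hd : 1 ≤ d)
    (hk : ∀ (m : ℕ) (c₀ : EuclideanSpace ℝ (Fin d)) (p : Fin m → EuclideanSpace ℝ (Fin d)),
      (∀ i, dist (p i) c₀ = 2) → (∀ i j : Fin m, i ≠ j → 2 ≤ dist (p i) (p j)) → m ≤ k) :
    ∀ (n : ℕ) (c : Fin n → EuclideanSpace ℝ (Fin d)) (r : Fin n → ℝ),
      (∀ i, 0 < r i) →
      (∀ i j : Fin n, i ≠ j → r i + r j ≤ dist (c i) (c j)) →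
      ∃ f : Fin n → Fin (k + 1),
        ∀ i j : Fin n, i ≠ j → dist (c i) (c j) = r i + r j → f i ≠ f j := by
  intro n c r hr hc
  obtain ⟨f⟩ := chi_le_kissing_add_one_general hk hr hc
  exact ⟨f, fun _ _ hij htouch ↦ f.valid ⟨hij, htouch⟩⟩
end

section
/- For every d ≥ 2 there exist d + 2 closed balls in ℝ^d, with centers c₀, …, c_{d+1} and positive radii r₀, …, r_{d+1}, that are pairwise touching: dist(cᵢ, cⱼ) = rᵢ + rⱼ for all i ≠ j. (One may take d + 1 equal balls with centers at the vertices of a regular simplex, having the side length of the simplex as their diameters, together with a suitable small ball centered at the centroid touching all of them.) -/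
/-!
The vertices of a regular simplex of side `a` are the centers of `d + 1` balls of radius `a / 2`
touching each other. All of them are at distance `R` from the centroid, where
`R ^ 2 = a ^ 2 / 2 * (1 - 1 / (d + 1))`. For `d ≥ 2` this gives `a / 2 < R`, so the ball of
radius `R - a / 2` around the centroid is non-degenerate, and it touches all the others.

Such a simplex is obtained from an orthonormal family of `d + 1` vectors: it spans an affine
subspace of dimension only `d`, which can be moved isometrically into the ambient space.
-/

open Module

section Metric

variable {ι X : Type*} [PseudoMetricSpace X]

/-- The family `p` is equidistant with side `a` if any two of its points with distinct indices
are at distance `a`. In a Euclidean space these are the vertices of a regular simplex; affine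
independence is not part of the definition. -/
def IsEquidistant (p : ι → X) (a : ℝ) : Prop :=
  Pairwise fun i j => dist (p i) (p j) = a

/-- The balls with centers `c i` and radii `r i` are mutually touching: the radii are positive and
any two of the balls touch from outside. Only centers and radii are recorded, since the closed
balls as sets need not determine them in a general metric space. -/
def MutuallyTouching (c : ι → X) (r : ι → ℝ) : Prop :=
  (∀ i, 0 < r i) ∧ Pairwise fun i j => dist (c i) (c j) = r i + r j

theorem IsEquidistant.mutuallyTouching_cons {n : ℕ} {p : Fin n → X} {z : X} {a R : ℝ}
    (hp : IsEquidistant p a) (ha : 0 < a) (hR : a / 2 < R) (hz : ∀ i, dist (p i) z = R) :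
    MutuallyTouching (Fin.cons z p : Fin (n + 1) → X) (Fin.cons (R - a / 2) fun _ => a / 2) := by
  refine ⟨Fin.cases (sub_pos.2 hR) fun _ => half_pos ha, pairwise_fin_succ_iff.2 ⟨?_, ?_, ?_⟩⟩
  · simp [hz]
  · simp [dist_comm z, hz]
  · intro i j hij
    simpa using hp hij

end Metric

section Euclidean

variable {ι V P : Type*} [NormedAddCommGroup V] [InnerProductSpace ℝ V] [MetricSpace P]
  [NormedAddTorsor V P]

theorem IsEquidistant.dist_affineCombination_sq {p : ι → P} {a : ℝ} (hp : IsEquidistant p a)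
    {s : Finset ι} {w₁ w₂ : ι → ℝ} (h₁ : ∑ i ∈ s, w₁ i = 1) (h₂ : ∑ i ∈ s, w₂ i = 1) :
    dist (s.affineCombination ℝ p w₁) (s.affineCombination ℝ p w₂) ^ 2 =
      a ^ 2 / 2 * ∑ i ∈ s, (w₁ i - w₂ i) ^ 2 := by
  classical
  set u := w₁ - w₂ with hu
  have sum_u : ∑ i ∈ s, u i = 0 := by simp [hu, h₁, h₂]
  have dist_sq (i j : ι) :
      dist (p i) (p j) * dist (p i) (p j) = a ^ 2 - if i = j then a ^ 2 else 0 := by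
    split_ifs with h
    · simp [h]
    · rw [hp h]; ring
  have row (i : ι) (hi : i ∈ s) :
      ∑ j ∈ s, u i * u j * (dist (p i) (p j) * dist (p i) (p j)) = -(a ^ 2 * u i ^ 2) := by
    simp_rw [dist_sq, mul_sub, Finset.sum_sub_distrib, ← Finset.sum_mul, ← Finset.mul_sum, sum_u]
    simp only [mul_zero, zero_mul, mul_ite, Finset.sum_ite_eq, hi, ↓reduceIte, zero_sub]
    ring
  rw [sq, EuclideanGeometry.dist_affineCombination p h₁ h₂, Finset.sum_congr rfl row,
    Finset.sum_neg_distrib, neg_neg, ← Finset.mul_sum]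
  simp only [hu, Pi.sub_apply]
  ring

theorem IsEquidistant.dist_centroid_sq {p : ι → P} {a : ℝ} (hp : IsEquidistant p a)
    {s : Finset ι} {i : ι} (hi : i ∈ s) :
    dist (p i) (s.centroid ℝ p) ^ 2 = a ^ 2 / 2 * (1 - (s.card : ℝ)⁻¹) := by
  classical
  have card_ne_zero : (s.card : ℝ) ≠ 0 := by exact_mod_cast Finset.card_ne_zero_of_mem hi
  have sum_single : ∑ j ∈ s, (Pi.single i 1 : ι → ℝ) j = 1 := by simp [hi]
  have sum_centroid := s.sum_centroidWeights_eq_one_of_cast_card_ne_zero card_ne_zero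
  have expand (j : ι) : ((Pi.single i 1 : ι → ℝ) j - (s.card : ℝ)⁻¹) ^ 2 =
      (Pi.single i 1 : ι → ℝ) j * (1 - 2 * (s.card : ℝ)⁻¹) + (s.card : ℝ)⁻¹ ^ 2 := by
    obtain rfl | hj := eq_or_ne j i
    · rw [Pi.single_eq_same]; ring
    · rw [Pi.single_eq_of_ne hj]; ring
  have sum_sq : ∑ j ∈ s, ((Pi.single i 1 : ι → ℝ) j - s.centroidWeights ℝ j) ^ 2 =
      1 - (s.card : ℝ)⁻¹ := by
    simp_rw [Finset.centroidWeights_apply, expand]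
    rw [Finset.sum_add_distrib, ← Finset.sum_mul, sum_single, Finset.sum_const, nsmul_eq_mul]
    field_simp
    ring
  rw [Finset.centroid_def, ← s.affineCombination_piSingle ℝ p hi,
    hp.dist_affineCombination_sq sum_single sum_centroid, sum_sq]

theorem IsEquidistant.mutuallyTouching_cons_centroid {n : ℕ} {p : Fin n → P} {a : ℝ}
    (hp : IsEquidistant p a) (ha : 0 < a) (hn : 2 < n) :
    ∃ r : Fin (n + 1) → ℝ,
      MutuallyTouching (Fin.cons (Finset.univ.centroid ℝ p) p : Fin (n + 1) → P) r := by
  set R := √(a ^ 2 / 2 * (1 - (n : ℝ)⁻¹))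
  have dist_centroid (i : Fin n) : dist (p i) (Finset.univ.centroid ℝ p) = R := by
    rw [← Real.sqrt_sq dist_nonneg, hp.dist_centroid_sq (Finset.mem_univ i), Finset.card_fin]
  have inv_lt : (n : ℝ)⁻¹ < 2⁻¹ := by gcongr; exact_mod_cast hn
  have half_lt : a / 2 < R := by
    apply Real.lt_sqrt_of_sq_lt
    nlinarith [pow_pos ha 2]
  exact ⟨_, hp.mutuallyTouching_cons ha half_lt dist_centroid⟩

theorem isEquidistant_of_orthonormal {v : ι → V} (hv : Orthonormal ℝ v) :
    IsEquidistant v √2 := by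
  intro i j hij
  rw [dist_eq_norm, norm_sub_eq_sqrt_iff_real_inner_eq_zero.2 (hv.2 hij), hv.1, hv.1]
  norm_num

theorem exists_linearIsometry_of_finrank_le_rank {W : Type*} [NormedAddCommGroup W]
    [InnerProductSpace ℝ W] [FiniteDimensional ℝ W]
    (h : (finrank ℝ W : Cardinal) ≤ Module.rank ℝ V) :
    Nonempty (W →ₗᵢ[ℝ] V) := by
  obtain ⟨v, hv⟩ := Module.le_rank_iff.1 h
  let b := stdOrthonormalBasis ℝ W
  have orthonormal_image :
      Orthonormal ℝ (b.toBasis.constr ℝ (InnerProductSpace.gramSchmidtNormed ℝ v) ∘ b.toBasis) := by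
    convert InnerProductSpace.gramSchmidtNormed_orthonormal hv using 1
    ext i
    exact b.toBasis.constr_basis ℝ _ i
  exact ⟨LinearMap.isometryOfOrthonormal _ (by simp) orthonormal_image⟩

theorem exists_isEquidistant {n : ℕ} (h : (n : Cardinal) ≤ Module.rank ℝ V) {a : ℝ} (ha : 0 ≤ a) :
    ∃ p : Fin (n + 1) → P, IsEquidistant p a := by
  let e : Fin (n + 1) → EuclideanSpace ℝ (Fin (n + 1)) := fun i => EuclideanSpace.single i 1
  have he : Orthonormal ℝ e := EuclideanSpace.orthonormal_single
  let W := vectorSpan ℝ (Set.range e)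
  have finrank_W : finrank ℝ W = n :=
    (he.linearIndependent.affineIndependent ℝ).finrank_vectorSpan (Fintype.card_fin _)
  obtain ⟨φ⟩ := exists_linearIsometry_of_finrank_le_rank (V := V) (W := W) (by rwa [finrank_W])
  let w : Fin (n + 1) → W := fun i => ⟨e i -ᵥ e 0,
    vsub_mem_vectorSpan ℝ (Set.mem_range_self i) (Set.mem_range_self 0)⟩
  have hw : IsEquidistant w √2 := fun i j hij => by
    simpa [w, Subtype.dist_eq] using isEquidistant_of_orthonormal he hij
  obtain ⟨q⟩ : Nonempty P := inferInstance
  refine ⟨fun i => (a / √2) • φ (w i) +ᵥ q, fun i j hij => ?_⟩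
  calc dist ((a / √2) • φ (w i) +ᵥ q) ((a / √2) • φ (w j) +ᵥ q)
      = a / √2 * dist (w i) (w j) := by
        rw [dist_vadd_cancel_right, dist_smul₀, φ.dist_map, Real.norm_of_nonneg (by positivity)]
    _ = a := by rw [hw hij, div_mul_cancel₀ _ (by positivity)]

theorem exists_mutually_touching_balls_general {d : ℕ} (hd : 2 ≤ d)
    (hV : (d : Cardinal) ≤ Module.rank ℝ V) :
    ∃ (c : Fin (d + 2) → P) (r : Fin (d + 2) → ℝ), MutuallyTouching c r := by
  obtain ⟨p, hp⟩ := exists_isEquidistant (P := P) hV zero_le_two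
  exact ⟨_, hp.mutuallyTouching_cons_centroid two_pos (by lia)⟩

end Euclidean

/-- For every `d ≥ 2` there exist `d + 2` closed balls in `ℝ^d` with positive radii that are
pairwise touching. -/
theorem exists_mutually_touching_balls (d : ℕ) (hd : 2 ≤ d) :
    ∃ (c : Fin (d + 2) → EuclideanSpace ℝ (Fin d)) (r : Fin (d + 2) → ℝ),
      (∀ i, 0 < r i) ∧
      (∀ i j : Fin (d + 2), i ≠ j → dist (c i) (c j) = r i + r j) :=
  exists_mutually_touching_balls_general hd (by rw [← finrank_eq_rank, finrank_euclideanSpace_fin])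
end

section
/- For every d ≥ 2 there exists a finite family of pairwise non-overlapping closed balls in ℝ^d with positive radii that admits no proper colouring with d + 1 colours; consequently at least d + 2 colours are required, i.e. χ(d) ≥ d + 2. -/
/-!
In a regular `d`-simplex of edge length `√2` the circumradius is `√(1 - 1 / (d + 1))`, which exceeds
half the edge length exactly when `d ≥ 2`. Balls of radius `√2 / 2` around the `d + 1` vertices
touch each other and leave room for one more ball around the centre that touches all of them.
These `d + 2` pairwise touching balls need `d + 2` different colours.

The simplex is spanned by the standard basis of `ℝ^(d + 1)`: once recentred at its barycentre it
lies in the `d`-dimensional hyperplane orthogonal to the sum of the basis vectors.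
-/

open Module

section TouchingFamily

variable {ι κ E : Type*} [PseudoMetricSpace E]

/-- A family of pairwise touching balls, given by their centres `c` and positive radii `r`. Such
families witness lower bounds for `χ`, as their contact graph is complete. -/
structure IsTouchingFamily (c : ι → E) (r : ι → ℝ) : Prop where
  radius_pos : ∀ i, 0 < r i
  dist_eq : Pairwise fun i j => dist (c i) (c j) = r i + r j

namespace IsTouchingFamily

theorem not_exists_proper_colouring [Fintype ι] [Fintype κ] {c : ι → E} {r : ι → ℝ}
    (h : IsTouchingFamily c r) (hcard : Fintype.card κ < Fintype.card ι) :
    ¬ ∃ f : ι → κ, ∀ i j, i ≠ j → dist (c i) (c j) = r i + r j → f i ≠ f j := by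
  rintro ⟨f, hf⟩
  obtain ⟨i, j, hij, hfij⟩ := Fintype.exists_ne_map_eq_of_card_lt f hcard
  exact hf i j hij (h.dist_eq hij) hfij

theorem const {c : ι → E} {ρ : ℝ} (hρ : 0 < ρ) (hc : Pairwise fun i j => dist (c i) (c j) = 2 * ρ) :
    IsTouchingFamily c fun _ => ρ where
  radius_pos _ := hρ
  dist_eq _ _ hij := (hc hij).trans (two_mul ρ)

theorem cons {n : ℕ} {c : Fin n → E} {r : Fin n → ℝ} (h : IsTouchingFamily c r) {x : E} {s : ℝ}
    (hs : 0 < s) (hx : ∀ i, dist x (c i) = s + r i) :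
    IsTouchingFamily (Fin.cons x c : Fin (n + 1) → E) (Fin.cons s r : Fin (n + 1) → ℝ) where
  radius_pos := Fin.cases hs h.radius_pos
  dist_eq i j hij := by
    cases i using Fin.cases with
    | zero =>
      cases j using Fin.cases with
      | zero => exact absurd rfl hij
      | succ j => exact hx j
    | succ i =>
      cases j using Fin.cases with
      | zero => exact (dist_comm _ _).trans ((hx i).trans (add_comm _ _))
      | succ j => exact h.dist_eq (ne_of_apply_ne Fin.succ hij)

end IsTouchingFamily

end TouchingFamily

section SubMean

/-- The family `v` translated so that its barycentre becomes the origin; for orthonormal `v` these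
are the vertices of a regular simplex centred at the origin. -/
noncomputable def subMean {ι F : Type*} [Fintype ι] [AddCommGroup F] [Module ℝ F] (v : ι → F)
    (i : ι) : F :=
  v i - (Fintype.card ι : ℝ)⁻¹ • ∑ j, v j

variable {ι F : Type*} [NormedAddCommGroup F] [InnerProductSpace ℝ F] {v : ι → F}

theorem dist_of_orthonormal (hv : Orthonormal ℝ v) {i j : ι} (hij : i ≠ j) :
    dist (v i) (v j) = √2 := by
  rw [dist_eq_norm, eq_comm, Real.sqrt_eq_iff_eq_sq zero_le_two (norm_nonneg _), norm_sub_sq_real,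
    hv.2 hij, hv.1, hv.1]
  norm_num

variable [Fintype ι]

theorem inner_sum_of_orthonormal (hv : Orthonormal ℝ v) (i : ι) : inner ℝ (∑ j, v j) (v i) = 1 := by
  simpa using hv.inner_left_fintype 1 i

theorem norm_sq_sum_of_orthonormal (hv : Orthonormal ℝ v) :
    ‖∑ i, v i‖ ^ 2 = Fintype.card ι := by
  rw [← real_inner_self_eq_norm_sq, inner_sum]
  simp [inner_sum_of_orthonormal hv]

theorem subMean_mem_orthogonal_sum (hv : Orthonormal ℝ v) (i : ι) :
    subMean v i ∈ (Submodule.span ℝ {∑ j, v j})ᗮ := by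
  have : Nonempty ι := ⟨i⟩
  rw [Submodule.mem_orthogonal_singleton_iff_inner_right, subMean, inner_sub_right,
    real_inner_smul_right, inner_sum_of_orthonormal hv, real_inner_self_eq_norm_sq,
    norm_sq_sum_of_orthonormal hv, inv_mul_cancel₀ (by simp), sub_self]

theorem norm_subMean (hv : Orthonormal ℝ v) (i : ι) :
    ‖subMean v i‖ = √(1 - 1 / Fintype.card ι) := by
  have : Nonempty ι := ⟨i⟩
  have hcard : (Fintype.card ι : ℝ) ≠ 0 := by simp
  have hsq : ‖subMean v i‖ ^ 2 = 1 - 1 / Fintype.card ι := by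
    rw [subMean, norm_sub_sq_real, real_inner_smul_right, real_inner_comm,
      inner_sum_of_orthonormal hv, norm_smul, mul_pow, norm_sq_sum_of_orthonormal hv, hv.1]
    simp only [norm_inv, RCLike.norm_natCast]
    field_simp
    ring
  rw [← hsq, Real.sqrt_sq (norm_nonneg _)]

theorem dist_subMean (hv : Orthonormal ℝ v) {i j : ι} (hij : i ≠ j) :
    dist (subMean v i) (subMean v j) = √2 := by
  rw [subMean, subMean, dist_sub_right, dist_of_orthonormal hv hij]

end SubMean

theorem nonempty_linearIsometry_of_finrank_le_rank {𝕜 E F : Type*} [RCLike 𝕜]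
    [NormedAddCommGroup E] [InnerProductSpace 𝕜 E] [NormedAddCommGroup F] [InnerProductSpace 𝕜 F]
    [FiniteDimensional 𝕜 F] (h : (finrank 𝕜 F : Cardinal) ≤ Module.rank 𝕜 E) :
    Nonempty (F →ₗᵢ[𝕜] E) := by
  obtain ⟨v, hv⟩ := Module.le_rank_iff.mp h
  have hw := InnerProductSpace.gramSchmidtNormed_orthonormal hv
  let b := stdOrthonormalBasis 𝕜 F
  refine ⟨(b.toBasis.constr 𝕜 (InnerProductSpace.gramSchmidtNormed 𝕜 v)).isometryOfOrthonormal
    (v := b.toBasis) (by simp) ?_⟩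
  simpa [Function.comp_def] using hw

section RegularSimplex

variable {E : Type*} [NormedAddCommGroup E] [InnerProductSpace ℝ E] {d : ℕ}

theorem exists_regular_simplex (hE : (d : Cardinal) ≤ Module.rank ℝ E) :
    ∃ p : Fin (d + 1) → E,
      (∀ i, ‖p i‖ = √(1 - 1 / (d + 1))) ∧ Pairwise fun i j => dist (p i) (p j) = √2 := by
  let v := EuclideanSpace.basisFun (Fin (d + 1)) ℝ
  have hv : Orthonormal ℝ v := v.orthonormal
  have hsum : ∑ i, v i ≠ 0 := fun h => by simpa [h] using inner_sum_of_orthonormal hv 0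
  let H := (Submodule.span ℝ {∑ i, v i})ᗮ
  have : Fact (finrank ℝ (EuclideanSpace ℝ (Fin (d + 1))) = d + 1) := ⟨finrank_euclideanSpace_fin⟩
  have hH : finrank ℝ H = d := Submodule.finrank_orthogonal_span_singleton hsum
  obtain ⟨φ⟩ : Nonempty (H →ₗᵢ[ℝ] E) :=
    nonempty_linearIsometry_of_finrank_le_rank (hH.symm ▸ hE)
  refine ⟨fun i => φ ⟨subMean v i, subMean_mem_orthogonal_sum hv i⟩, fun i => ?_, fun i j hij => ?_⟩
  · simpa using norm_subMean hv i
  · exact (φ.dist_map _ _).trans (dist_subMean hv hij)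

theorem half_edge_lt_circumradius (hd : 2 ≤ d) : √2 / 2 < √(1 - 1 / ((d : ℝ) + 1)) := by
  have hd' : (2 : ℝ) ≤ d := mod_cast hd
  have hinv : 1 / ((d : ℝ) + 1) ≤ 1 / 3 := by gcongr; linarith
  apply Real.lt_sqrt_of_sq_lt
  rw [div_pow, Real.sq_sqrt zero_le_two]
  linarith

theorem exists_isTouchingFamily (hd : 2 ≤ d) (hE : (d : Cardinal) ≤ Module.rank ℝ E) :
    ∃ (c : Fin (d + 2) → E) (r : Fin (d + 2) → ℝ), IsTouchingFamily c r := by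
  obtain ⟨p, hnorm, hdist⟩ := exists_regular_simplex hE
  have hvertices : IsTouchingFamily p fun _ => √2 / 2 :=
    .const (by positivity) fun i j hij => (hdist hij).trans (by ring)
  refine ⟨_, _, hvertices.cons (x := 0) (sub_pos.mpr (half_edge_lt_circumradius hd)) fun i => ?_⟩
  rw [dist_zero_left, hnorm, sub_add_cancel]

theorem chi_ge_d_add_two_general (hd : 2 ≤ d) (hE : (d : Cardinal) ≤ Module.rank ℝ E) :
    ∃ (n : ℕ) (c : Fin n → E) (r : Fin n → ℝ),
      (∀ i, 0 < r i) ∧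
      (∀ i j : Fin n, i ≠ j → r i + r j ≤ dist (c i) (c j)) ∧
      ¬ ∃ f : Fin n → Fin (d + 1),
          ∀ i j : Fin n, i ≠ j → dist (c i) (c j) = r i + r j → f i ≠ f j := by
  obtain ⟨c, r, h⟩ := exists_isTouchingFamily hd hE
  exact ⟨d + 2, c, r, h.radius_pos, fun i j hij => (h.dist_eq hij).ge,
    h.not_exists_proper_colouring (by simp)⟩

end RegularSimplex

/-- For every `d ≥ 2` there exists a finite family of pairwise non-overlapping closed balls
in `ℝ^d` with positive radii that admits no proper colouring with `d + 1` colours: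
`χ(d) ≥ d + 2`. -/
theorem chi_ge_d_add_two (d : ℕ) (hd : 2 ≤ d) :
    ∃ (n : ℕ) (c : Fin n → EuclideanSpace ℝ (Fin d)) (r : Fin n → ℝ),
      (∀ i, 0 < r i) ∧
      (∀ i j : Fin n, i ≠ j → r i + r j ≤ dist (c i) (c j)) ∧
      ¬ ∃ f : Fin n → Fin (d + 1),
          ∀ i j : Fin n, i ≠ j → dist (c i) (c j) = r i + r j → f i ≠ f j :=
  chi_ge_d_add_two_general hd (by simp [← finrank_eq_rank])
end

section
/- Let p₁, …, pₙ be points in the Euclidean plane ℝ² with ‖pᵢ‖ = 2 for all i and ‖pᵢ − pⱼ‖ ≥ 2 for all i ≠ j. Then n ≤ 6. (Equivalently, at most six pairwise non-overlapping unit discs can touch a given unit disc: κ(2) ≤ 6.) -/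
/-!
If two nonzero vectors are at least as far apart as each is long, then in the triangle they span
with the origin the side opposite the origin is a longest one, so the angle there is at least
`π / 3`. Identify the plane with `ℂ` and cut the interval `(-π, π]` of arguments into six half-open
intervals of length `π / 3`: no two of the vectors have their arguments in the same interval.
-/

open InnerProductGeometry Module

theorem enatCard_le_of_pairwise_le_abs_sub {ι R : Type*} [Field R] [LinearOrder R]
    [IsStrictOrderedRing R] [FloorRing R] {f : ι → R} {a δ : R} {k : ℕ} (hδ : 0 < δ)
    (hf : ∀ i, f i ∈ Set.Ico a (a + k * δ)) (hsep : Pairwise fun i j => δ ≤ |f i - f j|) :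
    ENat.card ι ≤ k := by
  have hmem (i : ι) : ⌊(f i - a) / δ⌋ ∈ Finset.Ico (0 : ℤ) k := by
    rw [Finset.mem_Ico, Int.floor_nonneg, Int.floor_lt, Int.cast_natCast, div_lt_iff₀ hδ,
      sub_lt_iff_lt_add']
    exact ⟨div_nonneg (sub_nonneg.2 (hf i).1) hδ.le, (hf i).2⟩
  have hinj : Function.Injective fun i => (⟨_, hmem i⟩ : Finset.Ico (0 : ℤ) k) := by
    intro i j hij
    by_contra hne
    have hlt := Int.abs_sub_lt_one_of_floor_eq_floor (Subtype.ext_iff.1 hij)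
    rw [← sub_div, sub_sub_sub_cancel_right, abs_div, abs_of_pos hδ, div_lt_one hδ] at hlt
    exact (hsep hne).not_gt hlt
  calc
    ENat.card ι ≤ ENat.card (Finset.Ico (0 : ℤ) k) := ENat.card_le_card_of_injective hinj
    _ = k := by
      rw [ENat.card_eq_coe_fintype_card, Fintype.card_coe, Int.card_Ico, sub_zero,
        Int.toNat_natCast]

theorem angle_eq_arccos_cos_arg_sub_arg {z w : ℂ} (hz : z ≠ 0) (hw : w ≠ 0) :
    angle z w = Real.arccos (Real.cos (z.arg - w.arg)) := by
  have hcos : Real.cos (z / w).arg = Real.cos (z.arg - w.arg) := by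
    rw [← Real.Angle.cos_coe, Complex.arg_div_coe_angle hz hw, ← Real.Angle.coe_sub,
      Real.Angle.cos_coe]
  rw [Complex.angle_eq_abs_arg hz hw, ← hcos, ← Real.cos_abs,
    Real.arccos_cos (abs_nonneg _) (Complex.abs_arg_le_pi _)]

theorem angle_le_abs_arg_sub_arg {z w : ℂ} (hz : z ≠ 0) (hw : w ≠ 0) :
    angle z w ≤ |z.arg - w.arg| := by
  obtain hle | hlt := le_or_gt |z.arg - w.arg| Real.pi
  · rw [angle_eq_arccos_cos_arg_sub_arg hz hw, ← Real.cos_abs, Real.arccos_cos (abs_nonneg _) hle]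
  · exact (angle_le_pi z w).trans hlt.le

theorem enatCard_le_of_pairwise_two_pi_div_le_angle_complex {ι : Type*} {z : ι → ℂ} {k : ℕ}
    (hk : k ≠ 0) (hz : ∀ i, z i ≠ 0)
    (hsep : Pairwise fun i j => 2 * Real.pi / k ≤ angle (z i) (z j)) : ENat.card ι ≤ k := by
  refine enatCard_le_of_pairwise_le_abs_sub (f := fun i => Real.pi - (z i).arg) (a := 0)
    (δ := 2 * Real.pi / k) (by positivity) (fun i => ?_) fun i j hij => ?_
  · rw [mul_div_cancel₀ _ (Nat.cast_ne_zero.2 hk), Set.mem_Ico]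
    constructor <;> linarith [(z i).neg_pi_lt_arg, (z i).arg_le_pi]
  · beta_reduce
    rw [sub_sub_sub_cancel_left, abs_sub_comm]
    exact (hsep hij).trans (angle_le_abs_arg_sub_arg (hz i) (hz j))

section InnerProductSpace

variable {E : Type*} [NormedAddCommGroup E] [InnerProductSpace ℝ E]

theorem nonempty_linearIsometryEquiv_complex_of_finrank_eq_two (hE : finrank ℝ E = 2) :
    Nonempty (E ≃ₗᵢ[ℝ] ℂ) :=
  have : FiniteDimensional ℝ E := .of_finrank_eq_succ hE
  ⟨(Complex.isometryOfOrthonormal ((stdOrthonormalBasis ℝ E).reindex (finCongr hE))).symm⟩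

theorem enatCard_le_of_pairwise_two_pi_div_le_angle (hE : finrank ℝ E = 2) {ι : Type*}
    {p : ι → E} {k : ℕ} (hk : k ≠ 0) (hp : ∀ i, p i ≠ 0)
    (hsep : Pairwise fun i j => 2 * Real.pi / k ≤ angle (p i) (p j)) : ENat.card ι ≤ k := by
  obtain ⟨e⟩ := nonempty_linearIsometryEquiv_complex_of_finrank_eq_two hE
  refine enatCard_le_of_pairwise_two_pi_div_le_angle_complex (z := fun i => e (p i)) hk
    (fun i => e.map_eq_zero_iff.not.2 (hp i)) fun i j hij => ?_
  exact (hsep hij).trans_eq (e.toLinearIsometry.angle_map (p i) (p j)).symm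

theorem norm_sub_lt_max_of_angle_lt_pi_div_three {x y : E} (h : angle x y < Real.pi / 3) :
    ‖x - y‖ < max ‖x‖ ‖y‖ := by
  wlog hyx : ‖y‖ ≤ ‖x‖ generalizing x y
  · rw [norm_sub_rev, max_comm]
    exact this (by rwa [angle_comm]) (le_of_not_ge hyx)
  have hy : y ≠ 0 := by
    rintro rfl
    rw [angle_zero_right] at h
    linarith [Real.pi_pos]
  have hy_pos : 0 < ‖y‖ := norm_pos_iff.2 hy
  have hx_pos : 0 < ‖x‖ := hy_pos.trans_le hyx
  have hcos : 1 / 2 < Real.cos (angle x y) := by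
    rw [← Real.cos_pi_div_three]
    exact Real.cos_lt_cos_of_nonneg_of_le_pi (angle_nonneg x y) (by linarith [Real.pi_pos]) h
  rw [max_eq_left hyx]
  refine lt_of_pow_lt_pow_left₀ 2 hx_pos.le ?_
  calc
    ‖x - y‖ ^ 2 = ‖x‖ ^ 2 + ‖y‖ ^ 2 - 2 * (‖x‖ * ‖y‖) * Real.cos (angle x y) := by
      linear_combination
        norm_sub_sq_eq_norm_sq_add_norm_sq_sub_two_mul_norm_mul_norm_mul_cos_angle x y
    _ < ‖x‖ ^ 2 + ‖y‖ ^ 2 - 2 * (‖x‖ * ‖y‖) * (1 / 2) := by gcongr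
    _ = ‖x‖ ^ 2 - ‖y‖ * (‖x‖ - ‖y‖) := by ring
    _ ≤ ‖x‖ ^ 2 := sub_le_self _ (mul_nonneg hy_pos.le (sub_nonneg.2 hyx))

theorem kissing_number_plane_le_six_general (hE : finrank ℝ E = 2) {ι : Type*} {p : ι → E}
    (hp : ∀ i, p i ≠ 0) (hsep : Pairwise fun i j => max ‖p i‖ ‖p j‖ ≤ ‖p i - p j‖) :
    ENat.card ι ≤ 6 := by
  refine enatCard_le_of_pairwise_two_pi_div_le_angle hE (k := 6) (by decide) hp fun i j hij => ?_
  have hangle : Real.pi / 3 ≤ angle (p i) (p j) :=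
    le_of_not_gt fun hlt => (norm_sub_lt_max_of_angle_lt_pi_div_three hlt).not_ge (hsep hij)
  push_cast
  linarith

end InnerProductSpace

/-- At most six pairwise non-overlapping unit discs can touch a given unit disc in the
plane: if `‖pᵢ‖ = 2` for all `i` and `‖pᵢ - pⱼ‖ ≥ 2` for `i ≠ j`, then `n ≤ 6`. -/
theorem kissing_number_plane_le_six (n : ℕ) (p : Fin n → EuclideanSpace ℝ (Fin 2))
    (hnorm : ∀ i, ‖p i‖ = 2)
    (hsep : ∀ i j : Fin n, i ≠ j → 2 ≤ ‖p i - p j‖) :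
    n ≤ 6 := by
  have hp (i : Fin n) : p i ≠ 0 := norm_ne_zero_iff.1 (by simp [hnorm i])
  have hcard : ENat.card (Fin n) ≤ 6 :=
    kissing_number_plane_le_six_general finrank_euclideanSpace_fin hp fun i j hij => by
      simpa [hnorm] using hsep i j hij
  rw [ENat.card_eq_coe_fintype_card, Fintype.card_fin] at hcard
  exact_mod_cast hcard
end

section
/- Let c₁, …, cₙ be points of ℝ² and r₁, …, rₙ ≥ 1 real numbers such that ‖cᵢ‖ = 1 + rᵢ for all i (each disc of radius rᵢ centered at cᵢ touches the unit disc at the origin) and ‖cᵢ − cⱼ‖ ≥ rᵢ + rⱼ for i ≠ j (the discs are pairwise non-overlapping). Then n ≤ 6. -/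
/-!
If two discs both touch a disc of centre `p` whose radius is at most theirs, and do not overlap,
then the distance between their centres is the longest side of the triangle which these centres
form with `p`, so they are seen from `p` at an angle of at least `π / 3`. But cutting
the circle of directions at `p` into six half-open sectors of angle `π / 3` shows that some two of
any seven directions make an angle of less than `π / 3`.
-/

open Module InnerProductGeometry
open scoped Real RealInnerProductSpace

theorem exists_ne_addCircle_norm_sub_lt {ι : Type*} [Fintype ι] {p : ℝ} (hp : 0 < p) {n : ℕ}
    (hn : n ≠ 0) (hcard : n < Fintype.card ι) (f : ι → AddCircle p) :
    ∃ i j, i ≠ j ∧ ‖f i - f j‖ < p / n := by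
  have : Fact (0 < p) := ⟨hp⟩
  have hwidth : 0 < p / n := by positivity
  let t (i : ι) : ℝ := AddCircle.equivIco p 0 (f i)
  have coe_t (i : ι) : (t i : AddCircle p) = f i := AddCircle.coe_equivIco
  have t_mem (i : ι) : t i ∈ Set.Ico 0 p := by simpa using (AddCircle.equivIco p 0 (f i)).2
  have sector_mem (i : ι) : ⌊t i / (p / n)⌋ ∈ Finset.Ico (0 : ℤ) n := by
    rw [Finset.mem_Ico, Int.floor_nonneg, Int.floor_lt, Int.cast_natCast, div_lt_iff₀ hwidth,
      mul_div_cancel₀ _ (by positivity)]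
    exact ⟨div_nonneg (t_mem i).1 hwidth.le, (t_mem i).2⟩
  obtain ⟨i, -, j, -, hij, hsector⟩ :=
    Finset.exists_ne_map_eq_of_card_lt_of_maps_to (s := Finset.univ) (by simpa using hcard)
      fun i _ ↦ sector_mem i
  refine ⟨i, j, hij, ?_⟩
  calc ‖f i - f j‖ = ‖((t i - t j : ℝ) : AddCircle p)‖ := by rw [AddCircle.coe_sub, coe_t, coe_t]
    _ ≤ |t i - t j| := QuotientAddGroup.norm_mk_le_norm
    _ < p / n := by
      have := Int.abs_sub_lt_one_of_floor_eq_floor hsector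
      rwa [← sub_div, abs_div, abs_of_pos hwidth, div_lt_one hwidth] at this

theorem norm_angle_eq_abs_toReal (θ : Real.Angle) : ‖θ‖ = |θ.toReal| := by
  have hle : |θ.toReal| ≤ |2 * π| / 2 := by
    simpa [abs_of_pos Real.pi_pos] using θ.abs_toReal_le_pi
  conv_lhs => rw [← θ.coe_toReal]
  exact (AddCircle.norm_coe_eq_abs_iff _ Real.two_pi_pos.ne').2 hle

section InnerProductSpace

variable {V : Type*} [NormedAddCommGroup V] [InnerProductSpace ℝ V]

theorem pi_div_three_le_angle_of_norm_le_norm_sub {x y : V} (hx : ‖x‖ ≤ ‖x - y‖)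
    (hy : ‖y‖ ≤ ‖x - y‖) : π / 3 ≤ angle x y := by
  wlog hxy : ‖x‖ ≤ ‖y‖ generalizing x y
  · rw [angle_comm]
    rw [norm_sub_rev] at hx hy
    exact this hy hx (le_of_not_ge hxy)
  have hinner : ⟪x, y⟫ ≤ 1 / 2 * (‖x‖ * ‖y‖) := by
    have hsq : ‖y‖ ^ 2 ≤ ‖x - y‖ ^ 2 := by gcongr
    rw [norm_sub_sq_real] at hsq
    have hmul : ‖x‖ ^ 2 ≤ ‖x‖ * ‖y‖ := by rw [sq]; gcongr
    linarith
  have hcos : Real.cos (angle x y) ≤ Real.cos (π / 3) := by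
    rw [Real.cos_pi_div_three, cos_angle]
    exact div_le_of_le_mul₀ (by positivity) (by norm_num) hinner
  exact (Real.strictAntiOn_cos.le_iff_ge ⟨angle_nonneg x y, angle_le_pi x y⟩
    ⟨by positivity, by linarith [Real.pi_pos]⟩).1 hcos

variable [Fact (finrank ℝ V = 2)] {ι : Type*} [Fintype ι]

theorem exists_ne_angle_lt_two_pi_div {n : ℕ} (hn : n ≠ 0) (hcard : n < Fintype.card ι)
    {v : ι → V} (hv : ∀ i, v i ≠ 0) : ∃ i j, i ≠ j ∧ angle (v i) (v j) < 2 * π / n := by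
  have : FiniteDimensional ℝ V := .of_fact_finrank_eq_two
  let o : Orientation ℝ V (Fin 2) := (finBasisOfFinrankEq ℝ V Fact.out).orientation
  obtain ⟨k⟩ : Nonempty ι := Fintype.card_pos_iff.1 (by lia)
  obtain ⟨i, j, hij, hlt⟩ := exists_ne_addCircle_norm_sub_lt Real.two_pi_pos hn hcard
    fun i ↦ o.oangle (v k) (v i)
  refine ⟨j, i, hij.symm, ?_⟩
  rwa [o.angle_eq_abs_oangle_toReal (hv j) (hv i), ← norm_angle_eq_abs_toReal,
    ← o.oangle_sub_left (hv k) (hv j) (hv i)]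

theorem card_le_six_of_norm_le_norm_sub {v : ι → V} (hv : ∀ i, v i ≠ 0)
    (hsep : ∀ i j, i ≠ j → ‖v i‖ ≤ ‖v i - v j‖) : Fintype.card ι ≤ 6 := by
  by_contra! hcard
  obtain ⟨i, j, hij, hlt⟩ := exists_ne_angle_lt_two_pi_div (by simp) hcard hv
  have hle := pi_div_three_le_angle_of_norm_le_norm_sub (hsep i j hij)
    (norm_sub_rev (v i) (v j) ▸ hsep j i hij.symm)
  push_cast at hlt
  linarith

theorem smallest_disc_at_most_six_neighbours_general {P : Type*} [MetricSpace P]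
    [NormedAddTorsor V P] {p : P} {ρ : ℝ} {c : ι → P} {r : ι → ℝ} (hρ : 0 < ρ)
    (hr : ∀ i, ρ ≤ r i) (htouch : ∀ i, dist (c i) p = ρ + r i)
    (hsep : ∀ i j, i ≠ j → r i + r j ≤ dist (c i) (c j)) : Fintype.card ι ≤ 6 := by
  refine card_le_six_of_norm_le_norm_sub (v := fun i ↦ c i -ᵥ p) (fun i ↦ ?_) fun i j hij ↦ ?_
  · rw [vsub_ne_zero, ← dist_pos, htouch]
    linarith [hr i]
  · rw [vsub_sub_vsub_cancel_right, ← dist_eq_norm_vsub, ← dist_eq_norm_vsub, htouch]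
    linarith [hr j, hsep i j hij]

end InnerProductSpace

/-- A smallest disc in a planar configuration has at most six neighbours: if discs of radii
`rᵢ ≥ 1` centered at `cᵢ` touch the unit disc at the origin and are pairwise
non-overlapping, then `n ≤ 6`. -/
theorem smallest_disc_at_most_six_neighbours (n : ℕ)
    (c : Fin n → EuclideanSpace ℝ (Fin 2)) (r : Fin n → ℝ)
    (hr : ∀ i, 1 ≤ r i)
    (htouch : ∀ i, ‖c i‖ = 1 + r i)
    (hsep : ∀ i j : Fin n, i ≠ j → r i + r j ≤ ‖c i - c j‖) :
    n ≤ 6 := by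
  have : Fact (finrank ℝ (EuclideanSpace ℝ (Fin 2)) = 2) := ⟨finrank_euclideanSpace_fin⟩
  simpa using smallest_disc_at_most_six_neighbours_general one_pos hr
    (c := c) (p := 0) (by simpa using htouch) (by simpa [dist_eq_norm] using hsep)
end

section
/- Let c₁, …, c₆ be six points of ℝ² and r₁, …, r₆ ≥ 1 real numbers such that ‖cᵢ‖ = 1 + rᵢ for all i (each disc of radius rᵢ centered at cᵢ touches the unit disc at the origin) and ‖cᵢ − cⱼ‖ ≥ rᵢ + rⱼ for i ≠ j (the discs are pairwise non-overlapping). Then rᵢ = 1 for every i; that is, if six non-overlapping discs of radius at least 1 touch a unit disc, all six must be unit discs. -/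
/-! Fix one of the six discs. By the law of cosines, two non-overlapping discs of radius at least
`R` touching a disc of radius `R` are seen from its center `p` at an angle of at least `π / 3`, and
at exactly `π / 3` only if both radii are `R`. If no other disc were at angle exactly `π / 3` from
the fixed one, the directions of the other five would lie strictly inside the complementary arc of
length `4π / 3`. This arc splits into four half-open arcs of length `π / 3`, so two of the five
directions would make an angle less than `π / 3`. -/

open InnerProductGeometry Module Real
open scoped EuclideanGeometry

theorem exists_ne_abs_sub_lt_of_lt_card {ι : Type*} {s : Finset ι} {f : ι → ℝ} {a δ : ℝ} {m : ℕ}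
    (hδ : 0 < δ) (hm : m < s.card) (hf : ∀ i ∈ s, f i ∈ Set.Ico a (a + m * δ)) :
    ∃ i ∈ s, ∃ j ∈ s, i ≠ j ∧ |f i - f j| < δ := by
  have hcell : ∀ i ∈ s, ⌊(f i - a) / δ⌋ ∈ Finset.Ico (0 : ℤ) m := by
    intro i hi
    obtain ⟨hlow, hhigh⟩ := hf i hi
    rw [Finset.mem_Ico, Int.floor_nonneg, Int.floor_lt, div_lt_iff₀ hδ, Int.cast_natCast]
    exact ⟨div_nonneg (sub_nonneg.2 hlow) hδ.le, by linarith⟩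
  obtain ⟨i, hi, j, hj, hij, hfloor⟩ :=
    Finset.exists_ne_map_eq_of_card_lt_of_maps_to (by simpa using hm) hcell
  refine ⟨i, hi, j, hj, hij, ?_⟩
  have hlt := Int.abs_sub_lt_one_of_floor_eq_floor hfloor
  rwa [← sub_div, sub_sub_sub_cancel_right, abs_div, abs_of_pos hδ, div_lt_one hδ] at hlt

theorem abs_toReal_coe_le_abs (θ : ℝ) : |(θ : Angle).toReal| ≤ |θ| := by
  rcases lt_or_ge |θ| π with hlt | hge
  · obtain ⟨hlow, hhigh⟩ := abs_lt.1 hlt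
    rw [Angle.toReal_coe_eq_self_iff.2 ⟨hlow, hhigh.le⟩]
  · exact (Angle.abs_toReal_le_pi θ).trans hge

section PlanarAngles

variable {V : Type*} [NormedAddCommGroup V] [InnerProductSpace ℝ V] [Fact (finrank ℝ V = 2)]

theorem angle_le_abs_toReal_oangle_sub (o : Orientation ℝ V (Fin 2)) {x y z : V}
    (hx : x ≠ 0) (hy : y ≠ 0) (hz : z ≠ 0) :
    angle y z ≤ |(o.oangle x y).toReal - (o.oangle x z).toReal| := by
  rw [o.angle_eq_abs_oangle_toReal hy hz, ← o.oangle_sub_left hx hy hz, abs_sub_comm]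
  simpa only [Angle.coe_sub, Angle.coe_toReal] using
    abs_toReal_coe_le_abs ((o.oangle x z).toReal - (o.oangle x y).toReal)

theorem exists_ne_angle_eq_of_two_pi_le {ι : Type*} [Fintype ι] [Nontrivial ι] {v : ι → V} {δ : ℝ}
    (hv : ∀ i, v i ≠ 0) (hδ : 2 * π ≤ Fintype.card ι * δ)
    (hangle : Pairwise fun i j => δ ≤ angle (v i) (v j)) (i : ι) :
    ∃ j ≠ i, angle (v i) (v j) = δ := by
  classical
  by_contra! hne
  have : FiniteDimensional ℝ V := .of_fact_finrank_eq_two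
  let o : Orientation ℝ V (Fin 2) := (finBasisOfFinrankEq ℝ V Fact.out).orientation
  -- Measuring from `-v i` keeps the directions `v j` away from the jump of `Angle.toReal` at `π`.
  let f : ι → ℝ := fun j => (o.oangle (-v i) (v j)).toReal
  have hcard : 1 < Fintype.card ι := Fintype.one_lt_card
  have hδpos : 0 < δ := pos_of_mul_pos_right (two_pi_pos.trans_le hδ) (Nat.cast_nonneg _)
  have hcells : ((Fintype.card ι - 2 : ℕ) : ℝ) * δ = Fintype.card ι * δ - 2 * δ := by
    rw [Nat.cast_sub hcard]
    ring
  have hf : ∀ j ∈ Finset.univ.erase i,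
      f j ∈ Set.Ico (δ - π) (δ - π + (Fintype.card ι - 2 : ℕ) * δ) := by
    intro j hj
    have hji := Finset.ne_of_mem_erase hj
    have habs : |f j| < π - δ := by
      rw [← o.angle_eq_abs_oangle_toReal (neg_ne_zero.2 (hv i)) (hv j), angle_neg_left]
      exact sub_lt_sub_left ((hangle hji.symm).lt_of_ne' (hne j hji)) π
    obtain ⟨hlow, hhigh⟩ := abs_lt.1 habs
    constructor <;> linarith
  have hsurplus : Fintype.card ι - 2 < (Finset.univ.erase i).card := by
    rw [Finset.card_erase_of_mem (Finset.mem_univ i), Finset.card_univ]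
    lia
  obtain ⟨j, -, k, -, hjk, hlt⟩ := exists_ne_abs_sub_lt_of_lt_card hδpos hsurplus hf
  exact (angle_le_abs_toReal_oangle_sub o (neg_ne_zero.2 (hv i)) (hv j) (hv k)).not_gt
    (hlt.trans_le (hangle hjk))

end PlanarAngles

section TouchingDiscs

variable {V P : Type*} [NormedAddCommGroup V] [InnerProductSpace ℝ V] [MetricSpace P]
  [NormedAddTorsor V P] {p x y : P} {R a b : ℝ}

theorem two_mul_radius_mul_radius_le_of_touching (hab : 0 ≤ a + b)
    (hx : dist x p = R + a) (hy : dist y p = R + b) (hxy : a + b ≤ dist x y) :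
    2 * (a * b) ≤ (R + a) * (R + b) * (1 - cos (∠ x p y)) := by
  have hsq : (a + b) ^ 2 ≤ dist x y ^ 2 := by gcongr
  have hlaw := EuclideanGeometry.law_cos x p y
  rw [hx, hy] at hlaw
  linarith

theorem pi_div_three_le_angle_of_touching (hR : 0 < R) (ha : R ≤ a) (hb : R ≤ b)
    (hx : dist x p = R + a) (hy : dist y p = R + b) (hxy : a + b ≤ dist x y) :
    π / 3 ≤ ∠ x p y := by
  have hpos : 0 < (R + a) * (R + b) := mul_pos (by linarith) (by linarith)
  have hab : (R + a) * (R + b) ≤ (2 * a) * (2 * b) := by gcongr <;> linarith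
  have hkey := two_mul_radius_mul_radius_le_of_touching (by linarith) hx hy hxy
  have hcos : cos (∠ x p y) ≤ cos (π / 3) := by
    rw [cos_pi_div_three]
    refine le_of_mul_le_mul_left ?_ hpos
    linarith
  have hmem : ∠ x p y ∈ Set.Icc 0 π := ⟨angle_nonneg _ _, angle_le_pi _ _⟩
  exact (strictAntiOn_cos.le_iff_ge hmem ⟨by positivity, by linarith [pi_pos]⟩).1 hcos

theorem radius_eq_of_touching_of_angle_eq (hR : 0 < R) (ha : R ≤ a) (hb : R ≤ b)
    (hx : dist x p = R + a) (hy : dist y p = R + b) (hxy : a + b ≤ dist x y)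
    (hangle : ∠ x p y = π / 3) : a = R := by
  have hkey := two_mul_radius_mul_radius_le_of_touching (by linarith) hx hy hxy
  rw [hangle, cos_pi_div_three] at hkey
  have hb' : a * (R + b) ≤ a * (2 * b) := by gcongr <;> linarith
  have hle : 2 * a ≤ R + a := le_of_mul_le_mul_right (by linarith) (by linarith : 0 < R + b)
  linarith

theorem six_touching_discs_are_unit_general [Fact (finrank ℝ V = 2)] {ι : Type*} [Fintype ι]
    (hι : Fintype.card ι = 6) (hR : 0 < R) {c : ι → P} {r : ι → ℝ} (hr : ∀ i, R ≤ r i)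
    (htouch : ∀ i, dist (c i) p = R + r i)
    (hsep : Pairwise fun i j => r i + r j ≤ dist (c i) (c j)) (i : ι) :
    r i = R := by
  have : Nontrivial ι := Fintype.one_lt_card_iff_nontrivial.1 (by lia)
  have hne (j : ι) : c j -ᵥ p ≠ 0 := by
    rw [vsub_ne_zero, ← dist_pos, htouch]
    linarith [hr j]
  have hangle : Pairwise fun j k => π / 3 ≤ ∠ (c j) p (c k) := fun j k hjk =>
    pi_div_three_le_angle_of_touching hR (hr j) (hr k) (htouch j) (htouch k) (hsep hjk)
  have hsix : 2 * π ≤ Fintype.card ι * (π / 3) := by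
    rw [hι, Nat.cast_ofNat]
    linarith
  obtain ⟨j, hji, hij⟩ := exists_ne_angle_eq_of_two_pi_le hne hsix hangle i
  exact radius_eq_of_touching_of_angle_eq hR (hr i) (hr j) (htouch i) (htouch j)
    (hsep hji.symm) hij

end TouchingDiscs

/-- If six non-overlapping discs of radius at least 1 touch the unit disc at the origin,
then all six are unit discs. -/
theorem six_touching_discs_are_unit (c : Fin 6 → EuclideanSpace ℝ (Fin 2))
    (r : Fin 6 → ℝ)
    (hr : ∀ i, 1 ≤ r i)
    (htouch : ∀ i, ‖c i‖ = 1 + r i)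
    (hsep : ∀ i j : Fin 6, i ≠ j → r i + r j ≤ ‖c i - c j‖) :
    ∀ i, r i = 1 := by
  have : Fact (finrank ℝ (EuclideanSpace ℝ (Fin 2)) = 2) := ⟨finrank_euclideanSpace_fin⟩
  exact six_touching_discs_are_unit_general (c := c) (p := 0) (Fintype.card_fin 6) one_pos hr
    (by simpa only [dist_zero_right] using htouch)
    (by simpa only [Pairwise, dist_eq_norm] using hsep)
end

section
/- Every finite nonempty family of pairwise non-overlapping closed discs in the plane ℝ² with positive radii contains at least one disc which touches at most five of the other discs in the family. -/
/-!
Among the discs of smallest radius, choose one that is extreme in the direction of a fixed vector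
`u`. Since none of its neighbours is smaller, the centres of any two neighbours are seen from its
centre at an angle of at least `π / 3`, and at a strictly larger angle if one of the two neighbours
is bigger than the chosen disc. An open cone of half-angle `2π / 3` holds at most four directions
that are pairwise at angle at least `π / 3`. If some neighbour is bigger, the other neighbours lie
in such a cone around the direction opposite to it, so there are at most five in all. If none is
bigger, then by extremality all neighbours lie in a half-plane, which is contained in such a cone.
-/

section

open InnerProductGeometry Module
open scoped EuclideanGeometry Real RealInnerProductSpace

variable {ι V P : Type*} {s : Set ι}

theorem encard_le_of_mapsTo_Ico_of_pairwise_le_abs_sub {t : ι → ℝ} {a δ : ℝ} {n : ℕ} (hδ : 0 < δ)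
    (hIco : s.MapsTo t (Set.Ico a (a + n * δ)))
    (hsep : s.Pairwise fun i j ↦ δ ≤ |t i - t j|) : s.encard ≤ n := by
  have hnonneg : ∀ i ∈ s, 0 ≤ (t i - a) / δ := fun i hi ↦
    div_nonneg (sub_nonneg.2 (hIco hi).1) hδ.le
  rw [← Set.Nat.encard_range n]
  refine Set.encard_le_encard_of_injOn (f := fun i ↦ ⌊(t i - a) / δ⌋₊) (fun i hi ↦ ?_)
    fun i hi j hj hij ↦ ?_
  · refine (Nat.floor_lt (hnonneg i hi)).2 ((div_lt_iff₀ hδ).2 ?_)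
    exact sub_lt_iff_lt_add'.2 (hIco hi).2
  · by_contra hne
    have hfloor : ⌊(t i - a) / δ⌋ = ⌊(t j - a) / δ⌋ := by
      rw [← Int.natCast_floor_eq_floor (hnonneg i hi), ← Int.natCast_floor_eq_floor (hnonneg j hj)]
      exact congrArg _ hij
    have hlt := Int.abs_sub_lt_one_of_floor_eq_floor hfloor
    rw [← sub_div, sub_sub_sub_cancel_right, abs_div, abs_of_pos hδ, div_lt_one hδ] at hlt
    exact hlt.not_ge (hsep hi hj hne)

theorem abs_toReal_coe_le_abs_s13 (x : ℝ) : |(x : Real.Angle).toReal| ≤ |x| := by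
  rcases le_or_gt |x| π with hx | hx
  · have h := (Real.Angle.abs_toReal_coe_eq_self_iff.2 ⟨abs_nonneg x, hx⟩).le
    rcases abs_choice x with habs | habs
    · rwa [habs] at h ⊢
    · rwa [habs, Real.Angle.coe_neg, Real.Angle.abs_toReal_neg, ← habs] at h
  · exact (Real.Angle.abs_toReal_le_pi _).trans hx.le

variable [NormedAddCommGroup V] [InnerProductSpace ℝ V]

section Plane

variable [Fact (finrank ℝ V = 2)]

theorem angle_le_abs_toReal_oangle_sub_toReal_oangle (o : Orientation ℝ V (Fin 2)) {u x y : V}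
    (hu : u ≠ 0) (hx : x ≠ 0) (hy : y ≠ 0) :
    angle x y ≤ |(o.oangle u x).toReal - (o.oangle u y).toReal| := by
  rw [angle_comm, o.angle_eq_abs_oangle_toReal hy hx, ← o.oangle_sub_left hu hy hx]
  simpa only [Real.Angle.coe_sub, Real.Angle.coe_toReal] using
    abs_toReal_coe_le_abs_s13 ((o.oangle u x).toReal - (o.oangle u y).toReal)

theorem encard_le_of_angle_lt_of_pairwise_le_angle {u : V} (hu : u ≠ 0) {x : ι → V} {δ : ℝ} {n : ℕ}
    (hδ : 0 < δ) (hx : ∀ i ∈ s, x i ≠ 0) (hcone : ∀ i ∈ s, angle u (x i) < n * δ / 2)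
    (hsep : s.Pairwise fun i j ↦ δ ≤ angle (x i) (x j)) : s.encard ≤ n := by
  have := FiniteDimensional.of_fact_finrank_eq_two (K := ℝ) (V := V)
  let o : Orientation ℝ V (Fin 2) := (finBasisOfFinrankEq ℝ V Fact.out).orientation
  refine encard_le_of_mapsTo_Ico_of_pairwise_le_abs_sub (t := fun i ↦ (o.oangle u (x i)).toReal)
    (a := -(n * δ / 2)) hδ (fun i hi ↦ ?_) fun i hi j hj hij ↦ (hsep hi hj hij).trans <|
      angle_le_abs_toReal_oangle_sub_toReal_oangle o hu (hx i hi) (hx j hj)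
  have h := hcone i hi
  rw [o.angle_eq_abs_oangle_toReal hu (hx i hi), abs_lt] at h
  exact ⟨h.1.le, by linarith⟩

theorem encard_le_four_of_inner_nonpos {u : V} (hu : u ≠ 0) {x : ι → V} (hx : ∀ i ∈ s, x i ≠ 0)
    (hhalf : ∀ i ∈ s, ⟪u, x i⟫ ≤ 0) (hsep : s.Pairwise fun i j ↦ π / 3 ≤ angle (x i) (x j)) :
    s.encard ≤ 4 := by
  refine encard_le_of_angle_lt_of_pairwise_le_angle (n := 4) (neg_ne_zero.2 hu) (by positivity) hx
    (fun i hi ↦ ?_) hsep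
  have h : angle (-u) (x i) ≤ π / 2 := by
    rw [angle, Real.arccos_le_pi_div_two, inner_neg_left]
    exact div_nonneg (neg_nonneg.2 (hhalf i hi)) (by positivity)
  push_cast
  linarith [Real.pi_pos]

theorem encard_le_five_of_pi_div_three_lt_angle {x : ι → V} {i : ι} (hi : i ∈ s)
    (hx : ∀ j ∈ s, x j ≠ 0) (hlt : ∀ j ∈ s, j ≠ i → π / 3 < angle (x i) (x j))
    (hsep : s.Pairwise fun j k ↦ π / 3 ≤ angle (x j) (x k)) : s.encard ≤ 5 := by
  have hothers : (s \ {i}).encard ≤ 4 := by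
    refine encard_le_of_angle_lt_of_pairwise_le_angle (n := 4) (neg_ne_zero.2 (hx i hi))
      (by positivity) (fun j hj ↦ hx j hj.1) (fun j hj ↦ ?_) (hsep.mono Set.sdiff_subset)
    rw [angle_neg_left]
    push_cast
    linarith [hlt j hj.1 hj.2]
  calc s.encard = (s \ {i}).encard + 1 := (Set.encard_sdiff_singleton_add_one hi).symm
    _ ≤ 4 + 1 := by gcongr
    _ = 5 := by norm_num

end Plane

variable [MetricSpace P] [NormedAddTorsor V P]

theorem one_sub_two_mul_cos_angle_mul_dist_mul_dist (p q₁ q₂ : P) :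
    (1 - 2 * Real.cos (∠ q₁ p q₂)) * (dist q₁ p * dist q₂ p) =
      (dist q₁ q₂ - dist q₁ p) * (dist q₁ q₂ - dist q₂ p) +
        dist q₁ p * (dist q₁ q₂ - dist q₁ p) + dist q₂ p * (dist q₁ q₂ - dist q₂ p) := by
  linear_combination -EuclideanGeometry.law_cos q₁ p q₂

theorem pi_div_three_le_angle_of_dist_le {p q₁ q₂ : P} (h₁ : q₁ ≠ p) (h₂ : q₂ ≠ p)
    (hle₁ : dist q₁ p ≤ dist q₁ q₂) (hle₂ : dist q₂ p ≤ dist q₁ q₂) : π / 3 ≤ ∠ q₁ p q₂ := by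
  by_contra! hangle
  have hcos : 1 / 2 < Real.cos (∠ q₁ p q₂) := Real.cos_pi_div_three ▸
    Real.cos_lt_cos_of_nonneg_of_le_pi (EuclideanGeometry.angle_nonneg q₁ p q₂)
      (by linarith [Real.pi_pos]) hangle
  have hneg : (1 - 2 * Real.cos (∠ q₁ p q₂)) * (dist q₁ p * dist q₂ p) < 0 :=
    mul_neg_of_neg_of_pos (by linarith) (mul_pos (dist_pos.2 h₁) (dist_pos.2 h₂))
  rw [one_sub_two_mul_cos_angle_mul_dist_mul_dist] at hneg
  rw [← sub_nonneg] at hle₁ hle₂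
  exact hneg.not_ge (by positivity)

theorem pi_div_three_lt_angle_of_dist_le_of_dist_lt {p q₁ q₂ : P} (h₂ : q₂ ≠ p)
    (hle₁ : dist q₁ p ≤ dist q₁ q₂) (hlt₂ : dist q₂ p < dist q₁ q₂) : π / 3 < ∠ q₁ p q₂ := by
  by_contra! hangle
  have hcos : 1 / 2 ≤ Real.cos (∠ q₁ p q₂) := Real.cos_pi_div_three ▸
    Real.cos_le_cos_of_nonneg_of_le_pi (EuclideanGeometry.angle_nonneg q₁ p q₂)
      (by linarith [Real.pi_pos]) hangle
  have hnonpos : (1 - 2 * Real.cos (∠ q₁ p q₂)) * (dist q₁ p * dist q₂ p) ≤ 0 :=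
    mul_nonpos_of_nonpos_of_nonneg (by linarith) (by positivity)
  rw [one_sub_two_mul_cos_angle_mul_dist_mul_dist] at hnonpos
  rw [← sub_nonneg] at hle₁
  rw [← sub_pos] at hlt₂
  have hpos := dist_pos.2 h₂
  exact hnonpos.not_gt (by positivity)

theorem encard_touching_le_five_of_extreme [Fact (finrank ℝ V = 2)] {c : ι → P} {r : ι → ℝ}
    {o : ι} {u : V} (hu : u ≠ 0) (ho : 0 < r o)
    (hsep : s.Pairwise fun i j ↦ r i + r j ≤ dist (c i) (c j))
    (htouch : ∀ i ∈ s, dist (c i) (c o) = r i + r o)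
    (hext : ∀ i ∈ s, r o < r i ∨ r o = r i ∧ ⟪u, c i -ᵥ c o⟫ ≤ 0) : s.encard ≤ 5 := by
  have hmin : ∀ i ∈ s, r o ≤ r i := fun i hi ↦ (hext i hi).elim le_of_lt fun h ↦ h.1.le
  have hne : ∀ i ∈ s, c i ≠ c o := fun i hi ↦ by
    rw [← dist_pos, htouch i hi]
    linarith [hmin i hi]
  have hvne : ∀ i ∈ s, c i -ᵥ c o ≠ 0 := fun i hi ↦ vsub_ne_zero.2 (hne i hi)
  have hle : ∀ i ∈ s, ∀ j ∈ s, i ≠ j → dist (c i) (c o) ≤ dist (c i) (c j) := by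
    intro i hi j hj hij
    linarith [htouch i hi, hmin j hj, hsep hi hj hij]
  have hangle : s.Pairwise fun i j ↦ π / 3 ≤ ∠ (c i) (c o) (c j) := fun i hi j hj hij ↦
    pi_div_three_le_angle_of_dist_le (hne i hi) (hne j hj) (hle i hi j hj hij)
      (dist_comm (c j) (c i) ▸ hle j hj i hi hij.symm)
  by_cases hbig : ∃ i ∈ s, r o < r i
  · obtain ⟨i, hi, hri⟩ := hbig
    refine encard_le_five_of_pi_div_three_lt_angle hi hvne (fun j hj hji ↦ ?_) hangle
    refine pi_div_three_lt_angle_of_dist_le_of_dist_lt (hne j hj) (hle i hi j hj hji.symm) ?_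
    linarith [htouch j hj, hsep hi hj hji.symm]
  · push Not at hbig
    have hhalf : ∀ i ∈ s, ⟪u, c i -ᵥ c o⟫ ≤ 0 := fun i hi ↦
      ((hext i hi).resolve_left (hbig i hi).not_gt).2
    exact (encard_le_four_of_inner_nonpos hu hvne hhalf hangle).trans (by norm_num)

theorem exists_disc_with_at_most_five_neighbours_general {V P : Type*}
    [NormedAddCommGroup V] [InnerProductSpace ℝ V] [Fact (finrank ℝ V = 2)] [MetricSpace P]
    [NormedAddTorsor V P] {ι : Type*} [Finite ι] [Nonempty ι] (c : ι → P) (r : ι → ℝ)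
    (hr : ∀ i, 0 < r i) (hsep : ∀ i j, i ≠ j → r i + r j ≤ dist (c i) (c j)) :
    ∃ i, {j | j ≠ i ∧ dist (c i) (c j) = r i + r j}.ncard ≤ 5 := by
  have : Nontrivial V :=
    nontrivial_of_finrank_pos (R := ℝ) (Fact.out (p := finrank ℝ V = 2) ▸ two_pos)
  obtain ⟨u, hu⟩ := exists_ne (0 : V)
  let p : P := c (Classical.arbitrary ι)
  obtain ⟨o, ho⟩ := Finite.exists_min fun i ↦ toLex (r i, -⟪u, c i -ᵥ p⟫)
  refine ⟨o, (Set.encard_le_coe_iff_finite_ncard_le.1 ?_).2⟩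
  refine encard_touching_le_five_of_extreme hu (hr o) (fun i _ j _ hij ↦ hsep i j hij)
    (fun i hi ↦ by rw [dist_comm, hi.2, add_comm]) fun i _ ↦ ?_
  refine (Prod.Lex.toLex_le_toLex.1 (ho i)).imp_right (And.imp_right fun hle ↦ ?_)
  rw [← vsub_sub_vsub_cancel_right _ _ p, inner_sub_right, sub_nonpos]
  exact neg_le_neg_iff.1 hle

end

/-- Every finite nonempty family of pairwise non-overlapping closed discs in the plane with
positive radii contains a disc touching at most five of the other discs. -/
theorem exists_disc_with_at_most_five_neighbours (n : ℕ) (hn : 1 ≤ n)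
    (c : Fin n → EuclideanSpace ℝ (Fin 2)) (r : Fin n → ℝ)
    (hr : ∀ i, 0 < r i)
    (hsep : ∀ i j : Fin n, i ≠ j → r i + r j ≤ dist (c i) (c j)) :
    ∃ i : Fin n, {j : Fin n | j ≠ i ∧ dist (c i) (c j) = r i + r j}.ncard ≤ 5 := by
  have : Nonempty (Fin n) := ⟨⟨0, hn⟩⟩
  have : Fact (Module.finrank ℝ (EuclideanSpace ℝ (Fin 2)) = 2) := ⟨finrank_euclideanSpace_fin⟩
  exact exists_disc_with_at_most_five_neighbours_general c r hr hsep
end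

section
/- Every finite family of pairwise non-overlapping closed balls in ℝ³ with positive radii admits a proper colouring with 13 colours; that is, χ(3) ≤ 13 (this follows from χ(3) ≤ κ(3) + 1 together with Newton's kissing number κ(3) = 12). -/
/-!
Remove a smallest ball, colour the others recursively, and put the ball back: if it touches at most
twelve of them, thirteen colours suffice. The balls touching a smallest ball are seen from its
center under pairwise angles of at least 60°, so what is left is the kissing bound `κ(3) ≤ 12`.

The kissing bound is the three-point bound of Bachoc and Vallentin. Suppose that 13 unit vectors
have pairwise inner products at most `1/2`, and sum a polynomial in the inner products `(u, v, t)`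
over all triples of distinct vectors. The certificate below is built from sums of squares, from
sums of squares multiplied by `(1 - 2u)(1 + u)`, and from kernels that are positive semidefinite
once a vector of the triple is fixed; its sum is therefore nonnegative. On the other hand its
cyclic symmetrisation is negative on the whole cube `[-1, 1]³`, simply because its constant
coefficient is negative and outweighs all the others.
-/

open Finset Module
open scoped ComplexConjugate

namespace BallColouring

/-! ### Greedy colouring -/

section GreedyColouring

variable {V : Type*} {G : SimpleGraph V} [DecidableRel G.Adj] {k : ℕ}

lemma exists_coloring_on_finset
    (h : ∀ s : Finset V, s.Nonempty → ∃ v ∈ s, #{w ∈ s | G.Adj v w} ≤ k) (s : Finset V) :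
    ∃ f : V → Fin (k + 1), ∀ v ∈ s, ∀ w ∈ s, G.Adj v w → f v ≠ f w := by
  classical
  induction s using Finset.strongInduction with
  | H s ih =>
    obtain rfl | hs := s.eq_empty_or_nonempty
    · exact ⟨0, by simp⟩
    obtain ⟨v, hv, hdeg⟩ := h s hs
    obtain ⟨f, hf⟩ := ih _ (erase_ssubset hv)
    obtain ⟨a, -, ha⟩ : ∃ a ∈ univ, a ∉ image f {w ∈ s | G.Adj v w} :=
      exists_mem_notMem_of_card_lt_card <| by
        simpa using card_image_le.trans_lt (Nat.lt_succ_of_le hdeg)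
    have fresh {w} (hw : w ∈ s) (hvw : G.Adj v w) : a ≠ f w := fun haw =>
      ha (mem_image.2 ⟨w, mem_filter.2 ⟨hw, hvw⟩, haw.symm⟩)
    refine ⟨Function.update f v a, fun x hx y hy hxy => ?_⟩
    obtain rfl | hxv := eq_or_ne x v
    · simpa [hxy.ne'] using fresh hy hxy
    obtain rfl | hyv := eq_or_ne y v
    · simpa [hxy.ne] using (fresh hx hxy.symm).symm
    · simpa [hxv, hyv] using hf x (mem_erase.2 ⟨hxv, hx⟩) y (mem_erase.2 ⟨hyv, hy⟩) hxy

theorem colorable_of_forall_exists_card_adj_le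
    (h : ∀ s : Finset V, s.Nonempty → ∃ v ∈ s, #{w ∈ s | G.Adj v w} ≤ k) :
    G.Colorable (k + 1) := by
  refine SimpleGraph.nonempty_hom_of_forall_finite_subgraph_hom fun H hH => ?_
  choose f hf using exists_coloring_on_finset h hH.toFinset
  exact SimpleGraph.Coloring.mk (fun v => f v) fun {v w} hvw =>
    hf v (by simp) w (by simp) hvw.adj_sub

end GreedyColouring

/-! ### Ball packings and kissing configurations -/

section Packing

variable {ι κ E : Type*} [NormedAddCommGroup E]

/-- A family of pairwise non-overlapping closed balls with centers `c i` and radii `r i`. -/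
structure IsBallPacking (c : ι → E) (r : ι → ℝ) : Prop where
  radius_pos : ∀ i, 0 < r i
  add_le_dist : Pairwise fun i j => r i + r j ≤ dist (c i) (c j)

/-- The contact graph of a family of balls, whose proper colourings are to be found. -/
def touchingGraph (c : ι → E) (r : ι → ℝ) : SimpleGraph ι where
  Adj i j := i ≠ j ∧ dist (c i) (c j) = r i + r j
  symm := ⟨fun i j h => ⟨h.1.symm, by rw [dist_comm, h.2, add_comm]⟩⟩

variable [InnerProductSpace ℝ E]

/-- Unit vectors at pairwise angles of at least 60°, that is, the contact points of a kissing
arrangement of unit balls. -/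
structure IsKissingConfiguration (x : ι → E) : Prop where
  norm_eq_one : ∀ i, ‖x i‖ = 1
  inner_le_half : Pairwise fun i j => inner ℝ (x i) (x j) ≤ 1 / 2

lemma abs_inner_le_one {a b : E} (ha : ‖a‖ = 1) (hb : ‖b‖ = 1) : |inner ℝ a b| ≤ 1 := by
  simpa [ha, hb] using abs_real_inner_le_norm a b

lemma inner_normalize_le_half {a b : E} {ρ r s : ℝ} (hρ : 0 < ρ) (hr : ρ ≤ r) (hs : ρ ≤ s)
    (ha : ‖a‖ = ρ + r) (hb : ‖b‖ = ρ + s) (hab : r + s ≤ ‖a - b‖) :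
    inner ℝ (NormedSpace.normalize a) (NormedSpace.normalize b) ≤ 1 / 2 := by
  have cosine_rule := norm_sub_sq_real a b
  have hsq : (r + s) ^ 2 ≤ ‖a - b‖ ^ 2 := by gcongr; linarith
  rw [NormedSpace.normalize, NormedSpace.normalize, real_inner_smul_left, real_inner_smul_right,
    ← mul_assoc, ← mul_inv]
  rw [ha, hb] at cosine_rule ⊢
  rw [inv_mul_le_iff₀ (mul_pos (by linarith) (by linarith))]
  nlinarith [mul_nonneg (sub_nonneg.2 hr) (sub_nonneg.2 hs)]

variable {c : ι → E} {r : ι → ℝ}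

lemma IsBallPacking.isKissingConfiguration_normalize (h : IsBallPacking c r) {i : ι} {f : κ → ι}
    (hf : f.Injective) (hadj : ∀ a, (touchingGraph c r).Adj i (f a)) (hle : ∀ a, r i ≤ r (f a)) :
    IsKissingConfiguration fun a => NormedSpace.normalize (c (f a) - c i) := by
  have hnorm (a) : ‖c (f a) - c i‖ = r i + r (f a) := by
    rw [← dist_eq_norm, dist_comm, (hadj a).2]
  refine ⟨fun a => NormedSpace.norm_normalize ?_, fun a b hab => ?_⟩
  · rw [← norm_pos_iff, hnorm]
    exact add_pos (h.radius_pos _) (h.radius_pos _)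
  · refine inner_normalize_le_half (h.radius_pos i) (hle a) (hle b) (hnorm a) (hnorm b) ?_
    rw [sub_sub_sub_cancel_right, ← dist_eq_norm]
    exact h.add_le_dist (hf.ne hab)

/-- The bound `χ ≤ κ + 1`. -/
theorem IsBallPacking.colorable_touchingGraph (h : IsBallPacking c r) {k : ℕ}
    (hk : ∀ x : Fin (k + 1) → E, ¬ IsKissingConfiguration x) :
    (touchingGraph c r).Colorable (k + 1) := by
  classical
  refine colorable_of_forall_exists_card_adj_le fun s hs => ?_
  obtain ⟨i, hi, hmin⟩ := s.exists_min_image r hs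
  refine ⟨i, hi, ?_⟩
  by_contra! hcard
  obtain ⟨f⟩ : Nonempty (Fin (k + 1) ↪ {j // j ∈ s.filter fun j => (touchingGraph c r).Adj i j}) :=
    Function.Embedding.nonempty_of_card_le (by rwa [Fintype.card_fin, Fintype.card_coe])
  have hmem (a) := mem_filter.1 (f a).2
  exact hk _ (h.isKissingConfiguration_normalize (Subtype.val_injective.comp f.injective)
    (fun a => (hmem a).2) fun a => hmin _ (hmem a).1)

end Packing

/-! ### Sums over triples of distinct vectors -/

section TripleSum

variable {ι E : Type*} [Fintype ι] [DecidableEq ι] [NormedAddCommGroup E] [InnerProductSpace ℝ E]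

variable (ι) in
/-- The index set of three-point sums: triples of pairwise distinct indices. -/
def distinctTriples : Finset (ι × ι × ι) := {a | a.1 ≠ a.2.1 ∧ a.1 ≠ a.2.2 ∧ a.2.1 ≠ a.2.2}

/-- The three-point sum of `f`: for the triple `(i, j, l)`, the arguments `u`, `v`, `t` of `f` are
the inner products of the pairs `(i, j)`, `(i, l)`, `(j, l)`. -/
noncomputable def tripleSum (x : ι → E) (f : ℝ → ℝ → ℝ → ℝ) : ℝ :=
  ∑ a ∈ distinctTriples ι,
    f (inner ℝ (x a.1) (x a.2.1)) (inner ℝ (x a.1) (x a.2.2)) (inner ℝ (x a.2.1) (x a.2.2))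

variable {x : ι → E}

lemma tripleSum_eq_sum_sum_sum (f : ℝ → ℝ → ℝ → ℝ) :
    tripleSum x f = ∑ i, ∑ j ∈ {i}ᶜ, ∑ l ∈ {i, j}ᶜ,
      f (inner ℝ (x i) (x j)) (inner ℝ (x i) (x l)) (inner ℝ (x j) (x l)) := by
  rw [tripleSum, sum_finset_product _ univ
    fun i => ({i}ᶜ ×ˢ univ).filter fun b : ι × ι => b.2 ∈ ({i, b.1}ᶜ : Finset ι)]
  · refine sum_congr rfl fun i _ => ?_
    rw [sum_finset_product _ {i}ᶜ fun j => {i, j}ᶜ]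
    simp
  · simp [distinctTriples, eq_comm]

lemma tripleSum_add (f g : ℝ → ℝ → ℝ → ℝ) :
    tripleSum x (fun u v t => f u v t + g u v t) = tripleSum x f + tripleSum x g :=
  sum_add_distrib

lemma tripleSum_rotate (f : ℝ → ℝ → ℝ → ℝ) :
    tripleSum x (fun u v t => f t u v) = tripleSum x f :=
  sum_nbij' (fun a => (a.2.1, a.2.2, a.1)) (fun a => (a.2.2, a.1, a.2.1))
    (by simp +contextual [distinctTriples, eq_comm])
    (by simp +contextual [distinctTriples, eq_comm])
    (by simp) (by simp) fun a _ => by simp only [real_inner_comm]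

lemma tripleSum_neg_of_cyclic_neg {f : ℝ → ℝ → ℝ → ℝ} (hx : ∀ i, ‖x i‖ = 1)
    (hι : 2 < Fintype.card ι)
    (hf : ∀ u v t : ℝ, |u| ≤ 1 → |v| ≤ 1 → |t| ≤ 1 → f u v t + f v t u + f t u v < 0) :
    tripleSum x f < 0 := by
  have habs (i j) := abs_inner_le_one (hx i) (hx j)
  have hnonempty : (distinctTriples ι).Nonempty := by
    obtain ⟨i, j, l, h⟩ := Fintype.two_lt_card_iff.1 hι
    exact ⟨(i, j, l), by simpa [distinctTriples] using h⟩
  have three_mul : 3 * tripleSum x f = tripleSum x fun u v t => f u v t + f v t u + f t u v := by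
    rw [tripleSum_add, tripleSum_add, tripleSum_rotate f, tripleSum_rotate fun u v t => f t u v,
      tripleSum_rotate f]
    ring
  have : tripleSum x (fun u v t => f u v t + f v t u + f t u v) < 0 :=
    sum_neg (fun a _ => hf _ _ _ (habs _ _) (habs _ _) (habs _ _)) hnonempty
  linarith

/-- Adding the diagonal `j = l` to a sum over distinct triples; each diagonal term is shared among
the `card ι - 2` triples containing the pair. -/
lemma tripleSum_mul_add_diagonal (hx : ∀ i, ‖x i‖ = 1) (f : ℝ → ℝ → ℝ → ℝ) :
    tripleSum x (fun u v t => (Fintype.card ι - 2) * f u v t + f u u 1) =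
      (Fintype.card ι - 2) * ∑ i, ∑ j ∈ {i}ᶜ, ∑ l ∈ {i}ᶜ,
        f (inner ℝ (x i) (x j)) (inner ℝ (x i) (x l)) (inner ℝ (x j) (x l)) := by
  simp_rw [tripleSum_eq_sum_sum_sum, mul_sum (s := univ)]
  refine sum_congr rfl fun i _ => ?_
  rw [mul_sum]
  refine sum_congr rfl fun j hj => ?_
  have hij : j ≠ i := by simpa using hj
  have hcard : (#{j, i}ᶜ : ℝ) = Fintype.card ι - 2 := by
    rw [card_compl, Nat.cast_sub (card_le_univ _), card_pair hij, Nat.cast_two]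
  rw [pair_comm, ← add_sum_erase _ _ hj, ← compl_insert, sum_add_distrib, sum_const, nsmul_eq_mul,
    hcard, ← mul_sum, real_inner_self_eq_norm_sq, hx, one_pow]
  ring

end TripleSum

/-! ### Zonal kernels -/

section Kernel

variable {ι E : Type*} [NormedAddCommGroup E] [InnerProductSpace ℝ E]

/-- The map `z` is the orthogonal projection onto the plane `e^⊥`, identified with `ℂ`. -/
lemma exists_re_mul_conj_eq_inner_sub (hE : finrank ℝ E = 3) {e : E} (he : ‖e‖ = 1) :
    ∃ z : E → ℂ, ∀ x y,
      (z x * conj (z y)).re = inner ℝ x y - inner ℝ e x * inner ℝ e y := by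
  have : Fact (finrank ℝ E = 2 + 1) := ⟨hE⟩
  have : FiniteDimensional ℝ E := .of_fact_finrank_eq_succ 2
  have hplane : finrank ℝ (ℝ ∙ e)ᗮ = 2 :=
    Submodule.finrank_orthogonal_span_singleton (norm_ne_zero_iff.1 (by simp [he]))
  let φ := (Complex.isometryOfOrthonormal
    ((stdOrthonormalBasis ℝ (ℝ ∙ e)ᗮ).reindex (finCongr hplane))).symm
  refine ⟨fun x => φ ((ℝ ∙ e)ᗮ.orthogonalProjectionOnto x), fun x y => ?_⟩
  have hunit : inner ℝ e e = 1 := by rw [real_inner_self_eq_norm_sq, he, one_pow]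
  rw [← inner_map_complex φ, Submodule.coe_inner]
  simp only [Submodule.coe_orthogonalProjectionOnto_apply, Submodule.starProjection_orthogonal_val,
    Submodule.starProjection_unit_singleton ℝ he, inner_sub_left, inner_sub_right,
    real_inner_smul_left, real_inner_smul_right, hunit, real_inner_comm e]
  rw [real_inner_comm x y]
  ring

/-- The double sum is `|∑ j, c j * z j ^ k| ^ 2`. -/
lemma sum_sum_mul_re_pow_nonneg (s : Finset ι) (c : ι → ℝ) (z : ι → ℂ) (k : ℕ) :
    0 ≤ ∑ j ∈ s, ∑ l ∈ s, c j * c l * ((z j * conj (z l)) ^ k).re := by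
  have hsq : ∑ j ∈ s, ∑ l ∈ s, c j * c l * ((z j * conj (z l)) ^ k).re =
      ((∑ j ∈ s, c j * z j ^ k) * conj (∑ j ∈ s, c j * z j ^ k)).re := by
    rw [map_sum, sum_mul_sum, Complex.re_sum]
    refine sum_congr rfl fun j _ => ?_
    rw [Complex.re_sum]
    refine sum_congr rfl fun l _ => ?_
    rw [map_mul, map_pow, Complex.conj_ofReal, mul_mul_mul_comm, ← mul_pow, ← Complex.ofReal_mul,
      Complex.re_ofReal_mul]
  rw [hsq, Complex.mul_conj, Complex.ofReal_re]
  exact Complex.normSq_nonneg _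

end Kernel

/-! ### Computable polynomials -/

/-- Univariate polynomials as lists of coefficients, constant coefficient first. Trailing zeros are
allowed, so the encoding is not unique; unlike Mathlib's polynomials it computes in the kernel. -/
def CoeffList (R : Type*) := List R

namespace CoeffList

variable {R S A : Type*}

/-- Addition of coefficient lists. -/
protected def add [Add R] : List R → List R → List R
  | [], q => q
  | p, [] => p
  | a :: p, b :: q => (a + b) :: CoeffList.add p q

/-- Multiplication of coefficient lists. -/
protected def mul [Zero R] [Add R] [Mul R] : List R → List R → List R
  | [], _ => []
  | a :: p, q => CoeffList.add (q.map (a * ·)) (0 :: CoeffList.mul p q)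

instance : Zero (CoeffList R) := ⟨([] : List R)⟩

instance [Add R] : Add (CoeffList R) := ⟨CoeffList.add⟩

instance [Zero R] [Add R] [Mul R] : Mul (CoeffList R) := ⟨CoeffList.mul⟩

/-- The value at `x` of the polynomial whose coefficients are interpreted through `φ`. The target
need not be a ring, so that polynomials can be substituted into polynomials. -/
def eval₂ [Zero S] [Add S] [Mul S] (φ : R → S) (x : S) (p : CoeffList R) : S :=
  List.foldr (fun a y => φ a + x * y) 0 p

/-- Homomorphisms between types of coefficients, which need not be rings: `CoeffList R` is not one,
because of trailing zeros. -/
structure PreservesArith [Zero R] [Add R] [Mul R] [Zero S] [Add S] [Mul S] (φ : R → S) : Prop where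
  map_zero : φ 0 = 0
  map_add : ∀ a b, φ (a + b) = φ a + φ b
  map_mul : ∀ a b, φ (a * b) = φ a * φ b

section Semiring

variable [Zero R] [Add R] [Mul R] [CommSemiring S] {φ : R → S}

lemma eval₂_add (hφ : PreservesArith φ) (x : S) (p q : CoeffList R) :
    eval₂ φ x (p + q) = eval₂ φ x p + eval₂ φ x q := by
  change eval₂ φ x (CoeffList.add p q) = _
  induction p, q using CoeffList.add.induct with
  | case1 | case2 => simp [CoeffList.add, eval₂]
  | case3 a p b q ih =>
    simp only [CoeffList.add, eval₂, List.foldr_cons, hφ.map_add] at ih ⊢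
    rw [ih]
    ring

lemma eval₂_map_mul (hφ : PreservesArith φ) (x : S) (a : R) (p : CoeffList R) :
    eval₂ φ x (List.map (a * ·) p) = φ a * eval₂ φ x p := by
  induction p with
  | nil => simp [eval₂]
  | cons b p ih =>
    simp only [eval₂, List.map_cons, List.foldr_cons, hφ.map_mul] at ih ⊢
    rw [ih]
    ring

lemma PreservesArith.eval₂ (hφ : PreservesArith φ) (x : S) :
    PreservesArith (CoeffList.eval₂ φ x) where
  map_zero := rfl
  map_add := eval₂_add hφ x
  map_mul p q := by
    change CoeffList.eval₂ φ x (CoeffList.mul p q) = _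
    induction p with
    | nil => simp [CoeffList.mul, CoeffList.eval₂]
    | cons a p ih =>
      refine (eval₂_add hφ x _ _).trans ?_
      rw [eval₂_map_mul hφ]
      simp only [CoeffList.eval₂, List.foldr_cons, hφ.map_zero] at ih ⊢
      rw [ih]
      ring

end Semiring

lemma PreservesArith.map_eval₂ [Zero S] [Add S] [Mul S] [Zero A] [Add A] [Mul A] {ψ : S → A}
    (hψ : PreservesArith ψ) (φ : R → S) (x : S) (p : CoeffList R) :
    ψ (CoeffList.eval₂ φ x p) = CoeffList.eval₂ (fun a => ψ (φ a)) (ψ x) p := by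
  induction p with
  | nil => exact hψ.map_zero
  | cons a p ih =>
    simp only [CoeffList.eval₂, List.foldr_cons, hψ.map_add, hψ.map_mul] at ih ⊢
    rw [ih]

lemma abs_eval₂_le {φ : R → ℝ} {ν : R → ℕ} (h : ∀ a, |φ a| ≤ ν a) {x : ℝ} (hx : |x| ≤ 1)
    (p : CoeffList R) : |eval₂ φ x p| ≤ eval₂ ν 1 p := by
  induction p with
  | nil => simp [eval₂]
  | cons a p ih =>
    simp only [eval₂, List.foldr_cons, one_mul, Nat.cast_add] at ih ⊢
    refine (abs_add_le _ _).trans (add_le_add (h a) ?_)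
    rw [abs_mul]
    exact (mul_le_of_le_one_left (abs_nonneg _) hx).trans ih

end CoeffList

open CoeffList (eval₂ PreservesArith)

/-- Integer polynomials in the inner products `u`, `v`, `t` of a triple of vectors: polynomials in
`u` over polynomials in `v` over polynomials in `t`. -/
abbrev TriPoly := CoeffList (CoeffList (CoeffList ℤ))

namespace TriPoly

/-- Constant polynomials. -/
def C (n : ℤ) : TriPoly := [[[n]]]

/-- The variable `u`. -/
def U : TriPoly := [[], [[1]]]

/-- The variable `v`. -/
def V : TriPoly := [[[], [1]]]

/-- The variable `t`. -/
def T : TriPoly := [[[0, 1]]]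

instance : Sub TriPoly := ⟨fun p q => p + C (-1) * q⟩

/-- The polynomial function on `ℝ³`. -/
noncomputable def eval (p : TriPoly) (u v t : ℝ) : ℝ := eval₂ (eval₂ (eval₂ (↑) t) v) u p

/-- Substitution of `x`, `y`, `z` for the variables `u`, `v`, `t`. -/
def subst (p x y z : TriPoly) : TriPoly := eval₂ (eval₂ (eval₂ C z) y) x p

/-- The sum of the absolute values of the coefficients. -/
def l1Norm (p : TriPoly) : ℕ := eval₂ (eval₂ (eval₂ Int.natAbs 1) 1) 1 p

section Eval

variable (p q x y z : TriPoly) (u v t : ℝ)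

lemma preservesArith_eval : PreservesArith fun p : TriPoly => p.eval u v t :=
  (((⟨Int.cast_zero, Int.cast_add, Int.cast_mul⟩ : PreservesArith ((↑) : ℤ → ℝ)).eval₂ t).eval₂
    v).eval₂ u

@[simp] lemma eval_zero : eval 0 u v t = 0 := rfl

@[simp] lemma eval_add : (p + q).eval u v t = p.eval u v t + q.eval u v t :=
  (preservesArith_eval u v t).map_add p q

@[simp] lemma eval_mul : (p * q).eval u v t = p.eval u v t * q.eval u v t :=
  (preservesArith_eval u v t).map_mul p q

@[simp] lemma eval_C (n : ℤ) : (C n).eval u v t = n := by simp [C, eval, eval₂, List.foldr]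

@[simp] lemma eval_U : U.eval u v t = u := by simp [U, eval, eval₂, List.foldr]

@[simp] lemma eval_V : V.eval u v t = v := by simp [V, eval, eval₂, List.foldr]

@[simp] lemma eval_T : T.eval u v t = t := by simp [T, eval, eval₂, List.foldr]

@[simp] lemma eval_sub : (p - q).eval u v t = p.eval u v t - q.eval u v t := by
  change (p + C (-1) * q).eval u v t = _
  simp [sub_eq_add_neg]

lemma eval_eval₂_C (l : CoeffList ℤ) :
    (eval₂ C x l).eval u v t = eval₂ (↑) (x.eval u v t) l := by
  simp only [(preservesArith_eval u v t).map_eval₂ C x l, eval_C]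

@[simp] lemma eval_subst :
    (p.subst x y z).eval u v t = p.eval (x.eval u v t) (y.eval u v t) (z.eval u v t) := by
  have h := preservesArith_eval u v t
  simp only [subst, h.map_eval₂, eval_C]
  rfl

end Eval

lemma abs_eval_le_l1Norm (p : TriPoly) {u v t : ℝ} (hu : |u| ≤ 1) (hv : |v| ≤ 1) (ht : |t| ≤ 1) :
    |p.eval u v t| ≤ p.l1Norm :=
  CoeffList.abs_eval₂_le (CoeffList.abs_eval₂_le (CoeffList.abs_eval₂_le
    (fun n => by rw [Nat.cast_natAbs, Int.cast_abs]) ht) hv) hu p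

/-- The cyclic symmetrisation, under the rotation of a triple of vectors. -/
def cyclicSum (p : TriPoly) : TriPoly := p + p.subst V T U + p.subst T U V

lemma eval_cyclicSum (p : TriPoly) (u v t : ℝ) :
    p.cyclicSum.eval u v t = p.eval u v t + p.eval v t u + p.eval t u v := by
  simp [cyclicSum]

lemma eval_add_eval_add_eval_neg {p : TriPoly} {n : ℕ} (hp : (p.cyclicSum + C n).l1Norm < n)
    {u v t : ℝ} (hu : |u| ≤ 1) (hv : |v| ≤ 1) (ht : |t| ≤ 1) :
    p.eval u v t + p.eval v t u + p.eval t u v < 0 := by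
  have hle := (le_abs_self _).trans (abs_eval_le_l1Norm (p.cyclicSum + C n) hu hv ht)
  have hlt : ((p.cyclicSum + C n).l1Norm : ℝ) < n := by exact_mod_cast hp
  rw [eval_add, eval_cyclicSum, eval_C, Int.cast_natCast] at hle
  linarith

/-! ### The certificate -/

/-- The polynomial in the inner products of `x`, `y`, `w` which equals `Re (z ^ k)`, where
`z = z_y * conj z_w` for the orthogonal projections of `y` and `w` to the plane `x^⊥ = ℂ`; the
recursion is that of the Chebyshev polynomials, with `Re z = t - u v` and
`|z|² = (1 - u²) (1 - v²)`. -/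
def zonal : ℕ → TriPoly
  | 0 => C 1
  | 1 => T - U * V
  | k + 2 => C 2 * (T - U * V) * zonal (k + 1) - (C 1 - U * U) * (C 1 - V * V) * zonal k

lemma eval_zonal {z : ℂ} {u v t : ℝ} (hre : z.re = t - u * v)
    (hnorm : Complex.normSq z = (1 - u * u) * (1 - v * v)) (k : ℕ) :
    (zonal k).eval u v t = (z ^ k).re := by
  induction k using Nat.twoStepInduction with
  | zero => simp [zonal]
  | one => simp [zonal, hre]
  | more k ih0 ih1 =>
    simp only [zonal, eval_sub, eval_mul, eval_C, eval_T, eval_U, eval_V, ih0, ih1, Int.cast_one,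
      Int.cast_ofNat, ← hre, ← hnorm, pow_succ, Complex.normSq_apply, Complex.mul_re,
      Complex.mul_im]
    ring

/-- The kernel `l(u) l(v) Re (z ^ k)` of the Bachoc–Vallentin bound. -/
def kernel (k : ℕ) (l : CoeffList ℤ) : TriPoly := eval₂ C U l * eval₂ C V l * zonal k

/-- The summand of a three-point sum over 13 vectors that accounts for the kernel, diagonal
included; `11 = 13 - 2`. -/
def kernelTerm (k : ℕ) (l : CoeffList ℤ) : TriPoly :=
  C 11 * kernel k l + (kernel k l).subst U U (C 1)

/-- The sum of the squares of the polynomials in a list. -/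
def sumSquares (L : List TriPoly) : TriPoly := (L.map fun p => p * p).sum

/-- The symmetric polynomial whose expression in the elementary symmetric polynomials is `p`. -/
def ofElementary (p : TriPoly) : TriPoly :=
  p.subst (U + V + T) (U * V + U * T + V * T) (U * V * T)

/-- Polynomials which transform like `2u - v - t` under permutations of the variables: combinations
of `2u - v - t` and `2u² - v² - t²` with symmetric coefficients. -/
def ofStandard (d : TriPoly × TriPoly) : TriPoly :=
  (C 2 * U - (V + T)) * ofElementary d.1 + (C 2 * (U * U) - (V * V + T * T)) * ofElementary d.2

/-- Polynomials which are even under the exchange of `v` and `t`. -/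
def ofEven (p : TriPoly) : TriPoly := p.subst U (V + T) ((V - T) * (V - T))

/-- Polynomials which are odd under the exchange of `v` and `t`. -/
def ofOdd (p : TriPoly) : TriPoly := (V - T) * ofEven p

/-- The kernels in the certificate: the pairs `(k, l)` of arguments of `kernel`. -/
def kernelData : List (ℕ × CoeffList ℤ) :=
  [(0, [1876, 2464, -2440, -8040, 0, 20314]),
   (1, [-9963, -15110, -22921, 22022, 34893]),
   (1, [-1977, 24116, 129, -15618]),
   (2, [-10145, 21754, 1251, -16483]),
   (2, [0, 0, 17525, 6463]),
   (3, [3038, 19416, 75]),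
   (3, [13009, 0, 9732]),
   (4, [-1360, 9567]),
   (4, [7496])]

/-- The squared symmetric polynomials, in the encoding of `ofElementary`. -/
def symmetricData : List TriPoly :=
  [[[[167, -17321], [-13707, 632], [-43417]], [[2023, -22498], [3155], [-50939]], [[2016,
    -16194], [45735]], [[-3062], [37510]], [[-8254]], [[-5618]]],
   [[[7, -12639], [-5103, -17349], [-14707]], [[0, 13201], [2266], [-5482]], [[-202, 18246]],
    [[-1101], [-5035]], [[2052]], [[2149]]]]

/-- The squared polynomials of standard type, in the encoding of `ofStandard`. -/
def standardData : List (TriPoly × TriPoly) :=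
  [([[[-799, 22067], [-7055]], [[6574, 50189], [-7176]], [[7035]], [[-9885]], [[-2275]]],
    [[[4924, -40983], [19524]], [[-4770], [12999]], [], [[-2259]]]),
   ([[[451, -6173], [-5212], [-16267]], [[4539], [15372]], [[-465], [12584]], [[-8860]],
    [[-3625]]], [[[1258, -5216], [1431]], [[6686], [10284]], [[78]], [[-4798]]])]

/-- The even polynomials with weighted squares, in the encoding of `ofEven`. -/
def evenData : List TriPoly :=
  [[[[1136, 2860, -2827], [818, -7719], [0, -2919], [], [-2063]], [[13059, -1930], [0, -1965],
    [-5171], [915]], [[33285], [], [1920]], [[28969]], [[2314]]],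
   [[[-144, -77, 2650], [4740, 14027], [76, 4123], [-4918], [549]], [[-3195, 12930], [6666,
    28447], [1443], [-2536]], [[0, 28], [9618], [-6394]], [[], [2230]], [[7514]]],
   [[[392, -1816, 1801], [8093, 3382], [-131], [-7348]], [[349, 502], [18187], [-1340],
    [-11296]], [[], [6831], [-1636]], [[], [-3397]], [[-132]]],
   [[[-1921, -1162, 951], [-16865, 16237], [-1224, 18425], [16010], [4000]], [[-12275, 1335],
    [], [11453], [-2839]], [[-11440, 6207], [4438], [-7715]], [[], [-11720]], [[-4435]]]]

/-- The odd polynomials with weighted squares, in the encoding of `ofOdd`. -/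
def oddData : List TriPoly :=
  [[[[-9037, 8938], [24385, 4493], [10611], [-5740]], [[-17139, 13359], [46791], [154]],
    [[-7792], [1757]], [[-2150]]],
   [[[11786, -7763], [-2975, -4726], [12653], [15582]], [[34636, -10722], [], [6521]], [[27911],
    [16561]], [[8122]]]]

/-- The polynomial whose three-point sum over a kissing configuration of 13 vectors is nonnegative,
although its cyclic symmetrisation is negative on the cube. Its coefficients are a rounded numerical
solution of the semidefinite program of Bachoc and Vallentin. -/
def certificate : TriPoly :=
  (kernelData.map fun d => kernelTerm d.1 d.2).sum +
    sumSquares (symmetricData.map ofElementary ++ standardData.map ofStandard) +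
    (C 1 - C 2 * U) * (C 1 + U) * sumSquares (evenData.map ofEven ++ oddData.map ofOdd)

lemma l1Norm_cyclicSum_certificate_lt : (certificate.cyclicSum + C 11000000).l1Norm < 11000000 := by
  decide +kernel

lemma eval_sumSquares_nonneg (L : List TriPoly) (u v t : ℝ) : 0 ≤ (sumSquares L).eval u v t := by
  refine List.sum_induction (fun p : TriPoly => 0 ≤ p.eval u v t) ?_ (by simp) ?_
  · intro p q hp hq
    simpa using add_nonneg hp hq
  · simp only [List.mem_map, forall_exists_index, and_imp, forall_apply_eq_imp_iff₂, eval_mul]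
    exact fun p _ => mul_self_nonneg _

end TriPoly

/-! ### The kissing bound -/

open TriPoly

section KissingBound

variable {E : Type*} [NormedAddCommGroup E] [InnerProductSpace ℝ E]

lemma sum_sum_kernel_nonneg {ι : Type*} (hE : finrank ℝ E = 3) {e : E} (he : ‖e‖ = 1) {x : ι → E}
    (hx : ∀ i, ‖x i‖ = 1) (s : Finset ι) (k : ℕ) (l : CoeffList ℤ) :
    0 ≤ ∑ i ∈ s, ∑ j ∈ s,
      (kernel k l).eval (inner ℝ e (x i)) (inner ℝ e (x j)) (inner ℝ (x i) (x j)) := by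
  obtain ⟨z, hz⟩ := exists_re_mul_conj_eq_inner_sub hE he
  have normSq_z (i) : Complex.normSq (z (x i)) = 1 - inner ℝ e (x i) * inner ℝ e (x i) := by
    rw [← Complex.ofReal_re (Complex.normSq _), ← Complex.mul_conj, hz, real_inner_self_eq_norm_sq,
      hx, one_pow]
  have eval_kernel (i j) :
      (kernel k l).eval (inner ℝ e (x i)) (inner ℝ e (x j)) (inner ℝ (x i) (x j)) =
        eval₂ (↑) (inner ℝ e (x i)) l * eval₂ (↑) (inner ℝ e (x j)) l *
          ((z (x i) * conj (z (x j))) ^ k).re := by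
    rw [kernel, eval_mul, eval_mul, eval_eval₂_C, eval_eval₂_C, eval_U, eval_V,
      eval_zonal (hz (x i) (x j)) (by
        rw [Complex.normSq_mul, Complex.normSq_conj, normSq_z, normSq_z])]
  simp only [eval_kernel]
  exact sum_sum_mul_re_pow_nonneg s (fun i => eval₂ (↑) (inner ℝ e (x i)) l) (fun i => z (x i)) k

variable {x : Fin 13 → E}

lemma tripleSum_kernelTerm_nonneg (hE : finrank ℝ E = 3) (hx : ∀ i, ‖x i‖ = 1) (k : ℕ)
    (l : CoeffList ℤ) : 0 ≤ tripleSum x (kernelTerm k l).eval := by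
  have hdiag : (kernelTerm k l).eval = fun u v t =>
      (Fintype.card (Fin 13) - 2) * (kernel k l).eval u v t + (kernel k l).eval u u 1 := by
    ext u v t
    simp only [kernelTerm, eval_add, eval_mul, eval_C, eval_subst, eval_U, Fintype.card_fin]
    norm_num
  rw [hdiag, tripleSum_mul_add_diagonal hx]
  exact mul_nonneg (by norm_num)
    (sum_nonneg fun i _ => sum_sum_kernel_nonneg hE (hx i) hx _ k l)

lemma tripleSum_certificate_nonneg (hE : finrank ℝ E = 3) (hx : IsKissingConfiguration x) :
    0 ≤ tripleSum x certificate.eval := by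
  have kernels_nonneg : 0 ≤ tripleSum x (kernelData.map fun d => kernelTerm d.1 d.2).sum.eval := by
    refine List.sum_induction (fun p : TriPoly => 0 ≤ tripleSum x p.eval) ?_ ?_ ?_
    · intro p q hp hq
      have hadd : (p + q).eval = fun u v t => p.eval u v t + q.eval u v t := by ext; simp
      rw [hadd, tripleSum_add]
      exact add_nonneg hp hq
    · simp [tripleSum]
    · simp only [List.mem_map, forall_exists_index, and_imp, forall_apply_eq_imp_iff₂]
      exact fun d _ => tripleSum_kernelTerm_nonneg hE hx.norm_eq_one d.1 d.2
  refine kernels_nonneg.trans (sum_le_sum fun a ha => ?_)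
  have hle := hx.inner_le_half (mem_filter.1 ha).2.1
  have hge := (abs_le.1 (abs_inner_le_one (hx.norm_eq_one a.1) (hx.norm_eq_one a.2.1))).1
  have weight_nonneg :
      0 ≤ (1 - 2 * inner ℝ (x a.1) (x a.2.1)) * (1 + inner ℝ (x a.1) (x a.2.1)) :=
    mul_nonneg (by linarith) (by linarith)
  simp only [certificate, eval_add, eval_mul, eval_sub, eval_C, eval_U, Int.cast_one,
    Int.cast_ofNat]
  rw [add_assoc]
  exact le_add_of_nonneg_right (add_nonneg (eval_sumSquares_nonneg _ _ _ _)
    (mul_nonneg weight_nonneg (eval_sumSquares_nonneg _ _ _ _)))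

theorem not_isKissingConfiguration_thirteen (hE : finrank ℝ E = 3) (x : Fin 13 → E) :
    ¬ IsKissingConfiguration x := fun hx =>
  (tripleSum_certificate_nonneg hE hx).not_gt <|
    tripleSum_neg_of_cyclic_neg hx.norm_eq_one (by simp) fun _ _ _ =>
      eval_add_eval_add_eval_neg l1Norm_cyclicSum_certificate_lt

end KissingBound

end BallColouring

theorem chi_three_le_thirteen_general {ι E : Type*} [NormedAddCommGroup E] [InnerProductSpace ℝ E]
    (hE : finrank ℝ E = 3) (c : ι → E) (r : ι → ℝ) (hr : ∀ i, 0 < r i)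
    (hsep : ∀ i j, i ≠ j → r i + r j ≤ dist (c i) (c j)) :
    ∃ f : ι → Fin 13, ∀ i j, i ≠ j → dist (c i) (c j) = r i + r j → f i ≠ f j := by
  have packing : BallColouring.IsBallPacking c r := ⟨hr, hsep⟩
  obtain ⟨f⟩ := packing.colorable_touchingGraph <|
    BallColouring.not_isKissingConfiguration_thirteen hE
  exact ⟨f, fun i j hij htouch => f.valid ⟨hij, htouch⟩⟩

/-- `χ(3) ≤ 13`: every finite family of pairwise non-overlapping closed balls in `ℝ³` with
positive radii admits a proper colouring with 13 colours. -/
theorem chi_three_le_thirteen (n : ℕ)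
    (c : Fin n → EuclideanSpace ℝ (Fin 3)) (r : Fin n → ℝ)
    (hr : ∀ i, 0 < r i)
    (hsep : ∀ i j : Fin n, i ≠ j → r i + r j ≤ dist (c i) (c j)) :
    ∃ f : Fin n → Fin 13,
      ∀ i j : Fin n, i ≠ j → dist (c i) (c j) = r i + r j → f i ≠ f j :=
  chi_three_le_thirteen_general (by simp) c r hr hsep
end
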